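/- arXiv:math/0111272 — 2 statements merged into one kernel-verified Lean document; each statement's English description precedes it below -/
import Mathlib

section
/- If f is a bounded measurable even function on the unit sphere S^{n-1} in R^n (n ≥ 2), p > 1 is not an even integer, and H(x) = ∫_{S^{n-1}} |⟨x,ξ⟩|^p f(ξ) dξ, then for any multi-index α with |α| even and |α| < p+1, the partial derivative D^α H exists and is continuous on R^n \ {0}, and D^α H(x) = i^{|α|} (C_p / C_{p-|α|}) ∫_{S^{n-1}} |⟨x,ξ⟩|^{p-|α|} ξ_1^{α_1}⋯ξ_n^{α_n} f(ξ) dξ, where C_t = 2^{t+1}√π Γ((t+1)/2)/Γ(-t/2). -/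
open MeasureTheory Real Set Metric
open scoped RealInnerProductSpace ENNReal MeasureTheory

noncomputable section


/-- Partial derivative in the `i`-th coordinate direction. -/
def pd (n : ℕ) (i : Fin n) (g : EuclideanSpace ℝ (Fin n) → ℝ) :
    EuclideanSpace ℝ (Fin n) → ℝ :=
  fun x => fderiv ℝ g x (EuclideanSpace.single i 1)

/-- Iterated mixed partial derivative along a list of coordinate directions
(a multi-index `α` corresponds to the list containing `i` with multiplicity `α_i`). -/
def mpd (n : ℕ) : List (Fin n) → (EuclideanSpace ℝ (Fin n) → ℝ) → EuclideanSpace ℝ (Fin n) → ℝ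
  | [], g => g
  | i :: L, g => pd n i (mpd n L g)


/-- The constant `C_t = 2^(t+1) √π Γ((t+1)/2) / Γ(-t/2)`. -/
def Cconst (t : ℝ) : ℝ :=
  (2 : ℝ) ^ (t + 1) * Real.sqrt π * Real.Gamma ((t + 1) / 2) / Real.Gamma (-t / 2)


/-!
Differentiating `∫ |⟪x, ξ⟫| ^ p f(ξ) dξ` under the integral sign runs into the kernel
`|⟪x, ξ⟫| ^ s` with `-1 < s < 0`, whose singularity moves with `x`, so that no fixed integrable
function dominates the difference quotients. Rotation invariance is the way around this: the
integral of `|⟪x, ξ⟫| ^ s` over the sphere is a constant multiple of `‖x‖ ^ s`, hence continuous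
off the origin, and in the generalized dominated convergence theorem the dominating functions may
vary with `x` as long as they converge together with their integrals. The constant is finite because
averaging `|⟪e, ξ⟫| ^ s` over a Gaussian vector `e` gives a finite one-dimensional Gaussian moment.

Each derivative of `sgn t ^ j |t| ^ q` gives `q sgn t ^ (j + 1) |t| ^ (q - 1)`, so `k` derivatives
produce the factor `p (p - 1) ⋯ (p - k + 1)`, which for even `k` is `i ^ k C_p / C_{p - k}` by the
functional equation of `Γ`.
-/

open Filter Topology ProbabilityTheory Module
open scoped NNReal

section DominatedConvergence

variable {α G H : Type*} {m : MeasurableSpace α} {μ : Measure α}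
  [NormedAddCommGroup G] [NormedAddCommGroup H]

theorem tendsto_integral_posPart_sub {ι : Type*} {l : Filter ι} [l.IsCountablyGenerated]
    {b : ι → α → ℝ} {b₀ : α → ℝ} (hb_int : ∀ᶠ n in l, Integrable (b n) μ)
    (hb₀_int : Integrable b₀ μ) (hb_nonneg : ∀ᶠ n in l, 0 ≤ᵐ[μ] b n)
    (hb_lim : ∀ᵐ a ∂μ, Tendsto (fun n => b n a) l (𝓝 (b₀ a)))
    (hb_int_lim : Tendsto (fun n => ∫ a, b n a ∂μ) l (𝓝 (∫ a, b₀ a ∂μ))) :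
    Tendsto (fun n => ∫ a, (b n a - b₀ a)⁺ ∂μ) l (𝓝 0) := by
  have h_neg : Tendsto (fun n => ∫ a, (b n a - b₀ a)⁻ ∂μ) l (𝓝 0) := by
    rw [← integral_zero α ℝ (μ := μ)]
    refine tendsto_integral_filter_of_dominated_convergence (fun a => |b₀ a|) ?_ ?_
      hb₀_int.abs ?_
    · filter_upwards [hb_int] with n hn using (hn.sub hb₀_int).neg_part.1
    · filter_upwards [hb_nonneg] with n hn
      filter_upwards [hn] with a (ha : 0 ≤ b n a)
      rw [Real.norm_of_nonneg (negPart_nonneg _), negPart_def]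
      exact sup_le (by linarith [le_abs_self (b₀ a)]) (abs_nonneg _)
    · filter_upwards [hb_lim] with a ha
      have h_sub := ha.sub_const (b₀ a)
      rw [sub_self] at h_sub
      simpa [negPart_def] using h_sub.neg.max (tendsto_const_nhds (x := (0 : ℝ)))
  have h_add := (hb_int_lim.sub_const (∫ a, b₀ a ∂μ)).add h_neg
  rw [sub_self, add_zero] at h_add
  refine h_add.congr' ?_
  filter_upwards [hb_int] with n hn
  have h_neg_int : Integrable (fun a => (b n a - b₀ a)⁻) μ := (hn.sub hb₀_int).neg_part
  have h_sub_int : Integrable (fun a => b n a - b₀ a) μ := hn.sub hb₀_int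
  rw [← integral_sub hn hb₀_int, ← integral_add h_sub_int h_neg_int]
  exact integral_congr_ae (.of_forall fun a => (sub_eq_iff_eq_add.1 (posPart_sub_negPart _)).symm)

theorem tendsto_integral_min_norm_sub {ι : Type*} {l : Filter ι} [l.IsCountablyGenerated]
    {F : ι → α → G} {f : α → G} {c : α → ℝ}
    (hF_meas : ∀ᶠ n in l, AEStronglyMeasurable (F n) μ) (hf_meas : AEStronglyMeasurable f μ)
    (hc_int : Integrable c μ) (hc_nonneg : 0 ≤ᵐ[μ] c)
    (hF_lim : ∀ᵐ a ∂μ, Tendsto (fun n => F n a) l (𝓝 (f a))) :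
    Tendsto (fun n => ∫ a, min ‖F n a - f a‖ (c a) ∂μ) l (𝓝 0) := by
  rw [← integral_zero α ℝ (μ := μ)]
  refine tendsto_integral_filter_of_dominated_convergence c ?_ ?_ hc_int ?_
  · filter_upwards [hF_meas] with n hn using (hn.sub hf_meas).norm.inf hc_int.1
  · refine .of_forall fun n => ?_
    filter_upwards [hc_nonneg] with a (ha : 0 ≤ c a)
    rw [Real.norm_of_nonneg (by positivity)]
    exact min_le_right _ _
  · filter_upwards [hF_lim, hc_nonneg] with a h_lim (ha : 0 ≤ c a)
    simpa [ha] using (h_lim.sub_const (f a)).norm.min (tendsto_const_nhds (x := c a))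

variable [NormedSpace ℝ G] [NormedSpace ℝ H]

theorem tendsto_integral_filter_of_tendsto_bound {ι : Type*} {l : Filter ι}
    [l.IsCountablyGenerated] {F : ι → α → G} {f : α → G} {b : ι → α → ℝ} {b₀ : α → ℝ}
    (hF_meas : ∀ᶠ n in l, AEStronglyMeasurable (F n) μ) (hf_meas : AEStronglyMeasurable f μ)
    (hF_le : ∀ᶠ n in l, ∀ᵐ a ∂μ, ‖F n a‖ ≤ b n a)
    (hf_le : ∀ᵐ a ∂μ, ‖f a‖ ≤ b₀ a)
    (hF_lim : ∀ᵐ a ∂μ, Tendsto (fun n => F n a) l (𝓝 (f a)))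
    (hb_int : ∀ᶠ n in l, Integrable (b n) μ) (hb₀_int : Integrable b₀ μ)
    (hb_lim : ∀ᵐ a ∂μ, Tendsto (fun n => b n a) l (𝓝 (b₀ a)))
    (hb_int_lim : Tendsto (fun n => ∫ a, b n a ∂μ) l (𝓝 (∫ a, b₀ a ∂μ))) :
    Tendsto (fun n => ∫ a, F n a ∂μ) l (𝓝 (∫ a, f a ∂μ)) := by
  have hf_int : Integrable f μ := hb₀_int.mono' hf_meas hf_le
  have hF_int : ∀ᶠ n in l, Integrable (F n) μ := by
    filter_upwards [hF_meas, hF_le, hb_int] with n h₁ h₂ h₃ using h₃.mono' h₁ h₂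
  have hb₀_nonneg : 0 ≤ᵐ[μ] b₀ := hf_le.mono fun a ha => (norm_nonneg _).trans ha
  have h_min : Tendsto (fun n => ∫ a, min ‖F n a - f a‖ (2 * b₀ a) ∂μ) l (𝓝 0) :=
    tendsto_integral_min_norm_sub hF_meas hf_meas (hb₀_int.const_mul 2)
      (hb₀_nonneg.mono fun a (ha : 0 ≤ b₀ a) => mul_nonneg zero_le_two ha) hF_lim
  have h_pos := tendsto_integral_posPart_sub hb_int hb₀_int
    (hF_le.mono fun n hn => hn.mono fun a ha => (norm_nonneg _).trans ha) hb_lim hb_int_lim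
  have h_sum := h_min.add h_pos
  rw [add_zero] at h_sum
  rw [tendsto_iff_norm_sub_tendsto_zero]
  refine squeeze_zero' (.of_forall fun n => norm_nonneg _) ?_ h_sum
  filter_upwards [hF_int, hF_le, hb_int] with n hn hn_le hbn
  have h_min_int : Integrable (fun a => min ‖F n a - f a‖ (2 * b₀ a)) μ :=
    (hn.sub hf_int).norm.inf (hb₀_int.const_mul 2)
  have h_pos_int : Integrable (fun a => (b n a - b₀ a)⁺) μ := (hbn.sub hb₀_int).pos_part
  rw [← integral_sub hn hf_int, ← integral_add h_min_int h_pos_int]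
  refine norm_integral_le_of_norm_le (h_min_int.add h_pos_int) ?_
  filter_upwards [hn_le, hf_le] with a h₁ h₂
  have h_tri : ‖F n a - f a‖ ≤ b n a + b₀ a := (norm_sub_le _ _).trans (add_le_add h₁ h₂)
  have h_le_pos : b n a - b₀ a ≤ (b n a - b₀ a)⁺ := le_posPart _
  have h_pos_nonneg : 0 ≤ (b n a - b₀ a)⁺ := posPart_nonneg _
  rcases min_choice ‖F n a - f a‖ (2 * b₀ a) with h | h <;> rw [h] <;> linarith

theorem norm_inv_norm_smul_sub_apply_le {c : ℝ} (hc : 0 ≤ c) {w : G} {y : H}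
    (hw : ‖w‖ ≤ c * ‖y‖) (A : H →L[ℝ] G) : ‖‖y‖⁻¹ • (w - A y)‖ ≤ c + ‖A‖ := by
  rw [norm_smul, norm_inv, norm_norm]
  rcases eq_or_ne y 0 with rfl | hy
  · simpa using add_nonneg hc (norm_nonneg A)
  rw [inv_mul_le_iff₀ (norm_pos_iff.2 hy)]
  calc ‖w - A y‖ ≤ ‖w‖ + ‖A y‖ := norm_sub_le _ _
    _ ≤ c * ‖y‖ + ‖A‖ * ‖y‖ := add_le_add hw (A.le_opNorm y)
    _ = ‖y‖ * (c + ‖A‖) := by ring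

theorem hasFDerivAt_integral_of_tendsto_lipschitz_bound
    {F : H → α → G} {F' : α → H →L[ℝ] G} {b : H → α → ℝ} {x₀ : H}
    (hF_int : ∀ᶠ x in 𝓝 x₀, Integrable (F x) μ) (hF'_int : Integrable F' μ)
    (hF_lip : ∀ᶠ x in 𝓝 x₀, ∀ᵐ a ∂μ, ‖F x a - F x₀ a‖ ≤ b x a * ‖x - x₀‖)
    (hF_diff : ∀ᵐ a ∂μ, HasFDerivAt (F · a) (F' a) x₀)
    (hb_int : ∀ᶠ x in 𝓝 x₀, Integrable (b x) μ)
    (hb_nonneg : ∀ᶠ x in 𝓝 x₀, ∀ᵐ a ∂μ, 0 ≤ b x a)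
    (hb_lim : ∀ᵐ a ∂μ, ContinuousAt (b · a) x₀)
    (hb_int_lim : ContinuousAt (fun x => ∫ a, b x a ∂μ) x₀) :
    HasFDerivAt (fun x => ∫ a, F x a ∂μ) (∫ a, F' a ∂μ) x₀ := by
  have hF₀_int := hF_int.self_of_nhds
  have hb₀_int := hb_int.self_of_nhds
  have h_quot : ∀ᶠ x in 𝓝 x₀,
      ‖∫ a, ‖x - x₀‖⁻¹ • (F x a - F x₀ a - F' a (x - x₀)) ∂μ‖ = ‖x - x₀‖⁻¹ *
        ‖(∫ a, F x a ∂μ) - (∫ a, F x₀ a ∂μ) - (∫ a, F' a ∂μ) (x - x₀)‖ := by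
    filter_upwards [hF_int] with x hx
    have h_sub_int : Integrable (fun a => F x a - F x₀ a) μ := hx.sub hF₀_int
    rw [integral_smul, norm_smul_of_nonneg (by positivity),
      integral_sub h_sub_int (hF'_int.apply_continuousLinearMap _), integral_sub hx hF₀_int,
      ContinuousLinearMap.integral_apply hF'_int]
  rw [hasFDerivAt_iff_tendsto]
  refine Tendsto.congr' h_quot ?_
  rw [← tendsto_zero_iff_norm_tendsto_zero, ← integral_zero α G (μ := μ)]
  refine tendsto_integral_filter_of_tendsto_bound (b := fun x a => b x a + ‖F' a‖)
    (b₀ := fun a => b x₀ a + ‖F' a‖) ?_ aestronglyMeasurable_const ?_ ?_ ?_ ?_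
    (hb₀_int.add hF'_int.norm) ?_ ?_
  · filter_upwards [hF_int] with x hx
    exact (((hx.sub hF₀_int).sub (hF'_int.apply_continuousLinearMap _)).smul _).1
  · filter_upwards [hF_lip, hb_nonneg] with x hx hb
    filter_upwards [hx, hb] with a ha hb₀
    exact norm_inv_norm_smul_sub_apply_le hb₀ ha _
  · filter_upwards [hb_nonneg.self_of_nhds] with a hb₀
    simpa using add_nonneg hb₀ (norm_nonneg _)
  · filter_upwards [hF_diff] with a ha
    rw [tendsto_zero_iff_norm_tendsto_zero]
    simpa only [norm_smul, norm_inv, norm_norm] using hasFDerivAt_iff_tendsto.1 ha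
  · filter_upwards [hb_int] with x hx using hx.add hF'_int.norm
  · filter_upwards [hb_lim] with a ha using ha.tendsto.add_const _
  · rw [integral_add hb₀_int hF'_int.norm]
    refine (hb_int_lim.tendsto.add_const _).congr' ?_
    filter_upwards [hb_int] with x hx using (integral_add hx hF'_int.norm).symm

end DominatedConvergence

section Gaussian

theorem integrable_comp_abs {f : ℝ → ℝ} (hf : IntegrableOn f (Ioi 0)) :
    Integrable fun x => f |x| := by
  have hf_abs : IntegrableOn (fun x => f |x|) (Ioi 0) :=
    hf.congr_fun (fun x (hx : 0 < x) => by rw [abs_of_pos hx]) measurableSet_Ioi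
  have hf_neg : IntegrableOn (fun x => f |-x|) (Ioi (-0)) := by simpa using hf_abs
  rw [← integrableOn_univ, ← Iio_union_Ici (a := (0 : ℝ)), integrableOn_union,
    integrableOn_Ici_iff_integrableOn_Ioi]
  exact ⟨by simpa using hf_neg.comp_neg_Iio, hf_abs⟩

theorem integrable_abs_rpow_gaussianReal {s : ℝ} (hs : -1 < s) :
    Integrable (fun t => |t| ^ s) (gaussianReal 0 1) := by
  rw [gaussianReal_of_var_ne_zero _ one_ne_zero, integrable_withDensity_iff_integrable_smul'
    (measurable_gaussianPDF 0 1) (.of_forall fun _ => gaussianPDF_lt_top)]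
  have h_int := (integrable_comp_abs (integrableOn_rpow_mul_exp_neg_mul_sq
    (b := 2⁻¹) (by norm_num) hs)).const_mul (√(2 * π))⁻¹
  refine h_int.congr (.of_forall fun t => ?_)
  simp only [toReal_gaussianPDF, gaussianPDFReal, smul_eq_mul, sq_abs, NNReal.coe_one]
  ring_nf

theorem ae_ne_zero_gaussianReal : ∀ᵐ t ∂gaussianReal 0 1, t ≠ 0 :=
  have := nullSingletonClass_gaussianReal (μ := 0) one_ne_zero
  Measure.ae_ne _ _

theorem lintegral_enorm_rpow_gaussianReal_lt_top {s : ℝ} (hs : -1 < s) :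
    ∫⁻ t, ‖t‖ₑ ^ s ∂gaussianReal 0 1 < ∞ := by
  convert (integrable_abs_rpow_gaussianReal hs).lintegral_lt_top using 1
  refine lintegral_congr_ae ?_
  filter_upwards [ae_ne_zero_gaussianReal] with t ht
  rw [Real.enorm_eq_ofReal_abs, ENNReal.ofReal_rpow_of_pos (abs_pos.2 ht)]

variable {E : Type*} [NormedAddCommGroup E] [InnerProductSpace ℝ E] [FiniteDimensional ℝ E]
  [MeasurableSpace E] [BorelSpace E]

theorem map_inner_stdGaussian (ξ : E) :
    (stdGaussian E).map (fun e => ⟪e, ξ⟫) = gaussianReal 0 (‖ξ‖₊ ^ 2) := by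
  have h_map := IsGaussian.map_eq_gaussianReal (μ := stdGaussian E) (innerSL ℝ ξ)
  rw [variance_dual_stdGaussian, integral_strongDual_stdGaussian, innerSL_apply_norm,
    Real.toNNReal_pow (norm_nonneg ξ), norm_toNNReal] at h_map
  simp_rw [real_inner_comm ξ]
  exact h_map

theorem ae_ne_zero_stdGaussian [Nontrivial E] : ∀ᵐ e ∂stdGaussian E, e ≠ 0 := by
  obtain ⟨ξ, hξ⟩ := exists_norm_eq E zero_le_one
  have h_ae := ae_ne_zero_gaussianReal
  rw [show (1 : ℝ≥0) = ‖ξ‖₊ ^ 2 by ext; simp [hξ], ← map_inner_stdGaussian] at h_ae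
  filter_upwards [ae_of_ae_map (by fun_prop) h_ae] with e he h
  simp [h] at he

end Gaussian

section SphericalMeasure

variable {E : Type*} [NormedAddCommGroup E] [InnerProductSpace ℝ E] [MeasurableSpace E]

/-- A finite measure on `E` which is concentrated on the unit sphere and invariant under all linear
isometries, that is, a multiple of the surface measure. -/
class IsSphericalMeasure (μ : Measure E) : Prop extends IsFiniteMeasure μ where
  ae_norm_eq_one : ∀ᵐ ξ ∂μ, ‖ξ‖ = 1
  measurePreserving : ∀ R : E ≃ₗᵢ[ℝ] E, MeasurePreserving R μ μ

namespace IsSphericalMeasure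

variable [BorelSpace E] (μ : Measure E) [IsSphericalMeasure μ] {s : ℝ} {x y : E}

theorem identDistrib_inner_of_norm_eq (h : ‖x‖ = ‖y‖) :
    IdentDistrib (fun ξ => ⟪x, ξ⟫) (fun ξ => ⟪y, ξ⟫) μ μ := by
  refine ⟨by fun_prop, by fun_prop, ?_⟩
  have h_refl := Submodule.reflection_sub h
  set R := (Submodule.span ℝ {x - y})ᗮ.reflection
  conv_rhs => rw [← (measurePreserving (μ := μ) R).map_eq]
  rw [Measure.map_map (by fun_prop) R.continuous.measurable, ← h_refl]
  simp only [Function.comp_def, LinearIsometryEquiv.inner_map_map]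

theorem identDistrib_inner_mul (hx : x ≠ 0) :
    IdentDistrib (fun ξ => ⟪y, ξ⟫) (fun ξ => ‖y‖ / ‖x‖ * ⟪x, ξ⟫) μ μ := by
  have h_norm : ‖y‖ = ‖(‖y‖ / ‖x‖) • x‖ := by
    rw [norm_smul, norm_div, norm_norm, norm_norm, div_mul_cancel₀ _ (norm_ne_zero_iff.2 hx)]
  simpa only [real_inner_smul_left] using identDistrib_inner_of_norm_eq μ h_norm

theorem integral_abs_inner_rpow (hx : x ≠ 0) :
    ∫ ξ, |⟪y, ξ⟫| ^ s ∂μ = (‖y‖ / ‖x‖) ^ s * ∫ ξ, |⟪x, ξ⟫| ^ s ∂μ :=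
  calc ∫ ξ, |⟪y, ξ⟫| ^ s ∂μ
      = ∫ ξ, |‖y‖ / ‖x‖ * ⟪x, ξ⟫| ^ s ∂μ :=
        ((identDistrib_inner_mul μ hx).comp (u := fun t => |t| ^ s) (by fun_prop)).integral_eq
    _ = ∫ ξ, (‖y‖ / ‖x‖) ^ s * |⟪x, ξ⟫| ^ s ∂μ := by
        congr with ξ
        rw [abs_mul, abs_of_nonneg (by positivity), mul_rpow (by positivity) (abs_nonneg _)]
    _ = (‖y‖ / ‖x‖) ^ s * ∫ ξ, |⟪x, ξ⟫| ^ s ∂μ := integral_const_mul _ _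

theorem continuousAt_integral_abs_inner_rpow (hx : x ≠ 0) :
    ContinuousAt (fun y => ∫ ξ, |⟪y, ξ⟫| ^ s ∂μ) x := by
  rw [funext fun y => integral_abs_inner_rpow μ (y := y) hx]
  refine ContinuousAt.mul_const (ContinuousAt.rpow_const (by fun_prop) (.inl ?_)) _
  exact div_ne_zero (norm_ne_zero_iff.2 hx) (norm_ne_zero_iff.2 hx)

variable [FiniteDimensional ℝ E]

theorem lintegral_lintegral_enorm_inner_rpow_lt_top (hs : -1 < s) :
    ∫⁻ e, ∫⁻ ξ, ‖⟪e, ξ⟫‖ₑ ^ s ∂μ ∂stdGaussian E < ∞ := by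
  rw [lintegral_lintegral_swap (by fun_prop)]
  have h_inner : ∀ᵐ ξ ∂μ, ∫⁻ e, ‖⟪e, ξ⟫‖ₑ ^ s ∂stdGaussian E
      = ∫⁻ t, ‖t‖ₑ ^ s ∂gaussianReal 0 1 := by
    filter_upwards [ae_norm_eq_one (μ := μ)] with ξ hξ
    have h_map := map_inner_stdGaussian ξ
    rw [show ‖ξ‖₊ = 1 by ext; exact hξ, one_pow] at h_map
    rw [← h_map, lintegral_map (by fun_prop) (by fun_prop)]
  rw [lintegral_congr_ae h_inner, lintegral_const]
  exact ENNReal.mul_lt_top (lintegral_enorm_rpow_gaussianReal_lt_top hs) (measure_lt_top _ _)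

theorem lintegral_enorm_inner_rpow_lt_top (hs : -1 < s) (hx : x ≠ 0) :
    ∫⁻ ξ, ‖⟪x, ξ⟫‖ₑ ^ s ∂μ < ∞ := by
  have : Nontrivial E := ⟨x, 0, hx⟩
  obtain ⟨e, h_lt, he⟩ : ∃ e : E, ∫⁻ ξ, ‖⟪e, ξ⟫‖ₑ ^ s ∂μ < ∞ ∧ e ≠ 0 :=
    ((ae_lt_top' (Measurable.lintegral_prod_right' (f := fun z : E × E => ‖⟪z.1, z.2⟫‖ₑ ^ s)
      (by fun_prop)).aemeasurable (lintegral_lintegral_enorm_inner_rpow_lt_top μ hs).ne).and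
      ae_ne_zero_stdGaussian).exists
  have hc : ‖‖x‖ / ‖e‖‖ₑ ≠ 0 := enorm_ne_zero.2 <| by positivity
  calc ∫⁻ ξ, ‖⟪x, ξ⟫‖ₑ ^ s ∂μ
      = ∫⁻ ξ, ‖‖x‖ / ‖e‖ * ⟪e, ξ⟫‖ₑ ^ s ∂μ :=
        ((identDistrib_inner_mul μ he).comp (u := fun t => ‖t‖ₑ ^ s) (by fun_prop)).lintegral_eq
    _ = ∫⁻ ξ, ‖‖x‖ / ‖e‖‖ₑ ^ s * ‖⟪e, ξ⟫‖ₑ ^ s ∂μ := by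
        congr with ξ
        rw [enorm_mul, ENNReal.mul_rpow_of_ne_top enorm_ne_top enorm_ne_top]
    _ = ‖‖x‖ / ‖e‖‖ₑ ^ s * ∫⁻ ξ, ‖⟪e, ξ⟫‖ₑ ^ s ∂μ := lintegral_const_mul _ (by fun_prop)
    _ < ∞ := ENNReal.mul_lt_top ((ENNReal.rpow_ne_top_of_ne_zero hc enorm_ne_top).lt_top) h_lt

-- `‖0‖ₑ ^ s = ∞` for negative `s`.
theorem ae_inner_ne_zero (hx : x ≠ 0) : ∀ᵐ ξ ∂μ, ⟪x, ξ⟫ ≠ 0 := by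
  have h_lt := lintegral_enorm_inner_rpow_lt_top μ (s := -2⁻¹) (by norm_num) hx
  filter_upwards [ae_lt_top (by fun_prop) h_lt.ne] with ξ hξ h
  simp [h] at hξ

theorem integrable_abs_inner_rpow (hs : -1 < s) (hx : x ≠ 0) :
    Integrable (fun ξ => |⟪x, ξ⟫| ^ s) μ := by
  refine ⟨(by fun_prop : Measurable _).aestronglyMeasurable, ?_⟩
  refine (lintegral_congr_ae ?_).trans_lt (lintegral_enorm_inner_rpow_lt_top μ hs hx)
  filter_upwards [ae_inner_ne_zero μ hx] with ξ hξ
  rw [Real.enorm_eq_ofReal_abs ⟪x, ξ⟫, Real.enorm_of_nonneg (by positivity),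
    ENNReal.ofReal_rpow_of_pos (abs_pos.2 hξ)]

end IsSphericalMeasure

end SphericalMeasure

section SignedRpow

/-- The kernel `sgn(t) ^ j |t| ^ q`, a family closed under differentiation in `t`. As
`(0 : ℝ) ^ 0 = 1`, its value at `t = 0` is a convention unless `0 < j` or `q ≠ 0`. -/
def signedRpow (j : ℕ) (q t : ℝ) : ℝ :=
  (SignType.sign t : ℝ) ^ j * |t| ^ q

variable {j : ℕ} {q t a b : ℝ}

theorem measurable_signedRpow : Measurable (signedRpow j q) := by
  have h_sign : Monotone fun t : ℝ => (SignType.sign t : ℝ) := by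
    intro a b hab
    have h := SignType.sign.monotone hab
    revert h
    dsimp only
    cases SignType.sign a <;> cases SignType.sign b <;> simp
  have h_sign_meas := h_sign.measurable
  unfold signedRpow
  fun_prop

theorem abs_signedRpow_le : |signedRpow j q t| ≤ |t| ^ q := by
  have h_sign : |(SignType.sign t : ℝ)| ≤ 1 := by
    rcases SignType.sign t with _ | _ | _ <;> simp
  rw [signedRpow, abs_mul, abs_pow, abs_of_nonneg (a := |t| ^ q) (by positivity)]
  exact mul_le_of_le_one_left (by positivity) (pow_le_one₀ (abs_nonneg _) h_sign)

theorem signedRpow_of_even (hj : Even j) (ht : t ≠ 0) : signedRpow j q t = |t| ^ q := by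
  rcases ht.lt_or_gt with ht | ht <;> simp [signedRpow, ht, hj.neg_one_pow]

theorem signedRpow_zero_left : signedRpow 0 q t = |t| ^ q := by
  simp [signedRpow]

theorem hasDerivAt_signedRpow (ht : t ≠ 0) :
    HasDerivAt (signedRpow j q) (q * signedRpow (j + 1) (q - 1) t) t := by
  have h_sign : ∀ᶠ s in 𝓝 t, SignType.sign s = SignType.sign t := by
    simpa [ContinuousAt] using continuousAt_sign_of_ne_zero ht
  have h_rpow := ((hasDerivAt_abs ht).rpow_const (p := q) (.inl (abs_ne_zero.2 ht))).const_mul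
    ((SignType.sign t : ℝ) ^ j)
  have h_eq : signedRpow j q =ᶠ[𝓝 t] fun s => (SignType.sign t : ℝ) ^ j * |s| ^ q := by
    filter_upwards [h_sign] with s hs using by rw [signedRpow, hs]
  refine (h_rpow.congr_of_eventuallyEq h_eq).congr_deriv ?_
  rw [signedRpow]
  ring

theorem rpow_le_rpow_add_rpow (ha : 0 < a) (hat : a ≤ t) (htb : t ≤ b) :
    t ^ q ≤ a ^ q + b ^ q := by
  have ht : 0 < t := ha.trans_le hat
  rcases le_total 0 q with hq | hq
  · exact (rpow_le_rpow ht.le htb hq).trans (le_add_of_nonneg_left (by positivity))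
  · exact (rpow_le_rpow_of_nonpos ha hat hq).trans
      (le_add_of_nonneg_right (rpow_nonneg (ht.le.trans htb) _))

theorem abs_rpow_le_of_mem_uIcc (hab : 0 < a * b) (ht : t ∈ uIcc a b) :
    |t| ^ q ≤ |a| ^ q + |b| ^ q := by
  wlog h_le : a ≤ b generalizing a b
  · rw [add_comm]
    exact this (by rwa [mul_comm]) (by rwa [uIcc_comm]) (le_of_not_ge h_le)
  obtain ⟨hat, htb⟩ := uIcc_of_le h_le ▸ ht
  rcases pos_and_pos_or_neg_and_neg_of_mul_pos hab with ⟨ha, hb⟩ | ⟨ha, hb⟩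
  · rw [abs_of_pos ha, abs_of_pos hb, abs_of_pos (ha.trans_le hat)]
    exact rpow_le_rpow_add_rpow ha hat htb
  · rw [abs_of_neg ha, abs_of_neg hb, abs_of_neg (htb.trans_lt hb), add_comm]
    exact rpow_le_rpow_add_rpow (neg_pos.2 hb) (neg_le_neg htb) (neg_le_neg hat)

theorem abs_signedRpow_sub_le_of_mul_pos (hq : 0 ≤ q) (hab : 0 < a * b) :
    |signedRpow j q b - signedRpow j q a| ≤ q * (|a| ^ (q - 1) + |b| ^ (q - 1)) * |b - a| := by
  have h_ne : ∀ t ∈ uIcc a b, t ≠ 0 := by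
    rintro _ ht rfl
    rcases mem_uIcc.1 ht with ⟨ha, hb⟩ | ⟨hb, ha⟩
    · exact hab.not_ge (mul_nonpos_of_nonpos_of_nonneg ha hb)
    · exact hab.not_ge (mul_nonpos_of_nonneg_of_nonpos ha hb)
  refine (convex_uIcc a b).norm_image_sub_le_of_norm_hasDerivWithin_le
    (fun t ht => (hasDerivAt_signedRpow (h_ne t ht)).hasDerivWithinAt) (fun t ht => ?_)
    left_mem_uIcc right_mem_uIcc
  rw [norm_mul, Real.norm_of_nonneg hq]
  exact mul_le_mul_of_nonneg_left (abs_signedRpow_le.trans (abs_rpow_le_of_mem_uIcc hab ht)) hq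

theorem abs_signedRpow_sub_le_of_mul_nonpos (hq : 0 < q) (hab : a * b ≤ 0) :
    |signedRpow j q b - signedRpow j q a| ≤ (|a| ^ (q - 1) + |b| ^ (q - 1)) * |b - a| := by
  have h_rpow : ∀ t : ℝ, |t| ^ q = |t| ^ (q - 1) * |t| := fun t => by
    simpa using rpow_add_one' (abs_nonneg t) (y := q - 1) (by simpa using hq.ne')
  have h_abs : |b - a| = |a| + |b| := by
    rcases mul_nonpos_iff.1 hab with ⟨ha, hb⟩ | ⟨ha, hb⟩
    · rw [abs_of_nonneg ha, abs_of_nonpos hb, abs_of_nonpos (by linarith)]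
      ring
    · rw [abs_of_nonpos ha, abs_of_nonneg hb, abs_of_nonneg (by linarith)]
      ring
  calc |signedRpow j q b - signedRpow j q a|
      ≤ |signedRpow j q b| + |signedRpow j q a| := abs_sub _ _
    _ ≤ |b| ^ q + |a| ^ q := add_le_add abs_signedRpow_le abs_signedRpow_le
    _ = |b| ^ (q - 1) * |b| + |a| ^ (q - 1) * |a| := by rw [h_rpow, h_rpow]
    _ ≤ |b| ^ (q - 1) * (|a| + |b|) + |a| ^ (q - 1) * (|a| + |b|) := by
        gcongr <;> simp
    _ = (|a| ^ (q - 1) + |b| ^ (q - 1)) * |b - a| := by rw [h_abs]; ring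

theorem abs_signedRpow_sub_le (hq : 0 < q) :
    |signedRpow j q b - signedRpow j q a| ≤
      (q + 1) * (|a| ^ (q - 1) + |b| ^ (q - 1)) * |b - a| := by
  rcases lt_or_ge 0 (a * b) with hab | hab
  · refine (abs_signedRpow_sub_le_of_mul_pos hq.le hab).trans ?_
    gcongr
    linarith
  · refine (abs_signedRpow_sub_le_of_mul_nonpos hq hab).trans ?_
    gcongr
    exact le_mul_of_one_le_left (by positivity) (by linarith)

end SignedRpow

section SignedCosineTransform

variable {E V : Type*} [NormedAddCommGroup E] [InnerProductSpace ℝ E]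
  [NormedAddCommGroup V] [NormedSpace ℝ V] {j : ℕ} {q : ℝ} {g : E → V} {x : E}

theorem continuousAt_abs_inner_rpow {ξ : E} (h : ⟪x, ξ⟫ ≠ 0) :
    ContinuousAt (fun y => |⟪y, ξ⟫| ^ q) x :=
  .rpow_const (f := fun y => |⟪y, ξ⟫|) (by fun_prop) (.inl (abs_ne_zero.2 h))

theorem continuousAt_signedRpow_inner_smul {ξ : E} (h : ⟪x, ξ⟫ ≠ 0) :
    ContinuousAt (fun y => signedRpow j q ⟪y, ξ⟫ • g ξ) x :=
  ((hasDerivAt_signedRpow h).continuousAt.comp (f := fun y => ⟪y, ξ⟫) (by fun_prop)).smul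
    continuousAt_const

theorem hasFDerivAt_signedRpow_inner_smul {ξ : E} (h : ⟪x, ξ⟫ ≠ 0) :
    HasFDerivAt (fun y => signedRpow j q ⟪y, ξ⟫ • g ξ)
      (q • signedRpow (j + 1) (q - 1) ⟪x, ξ⟫ • (innerSL ℝ ξ).smulRight (g ξ)) x := by
  have h_inner : HasFDerivAt (fun y => ⟪y, ξ⟫) (innerSL ℝ ξ) x := by
    simp_rw [real_inner_comm ξ]
    exact (innerSL ℝ ξ).hasFDerivAt
  have h_smul := ((hasDerivAt_signedRpow (j := j) (q := q) h).comp_hasFDerivAt x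
    h_inner).smul_const (g ξ)
  refine h_smul.congr_fderiv ?_
  ext v
  simp [mul_smul]

variable [MeasurableSpace E]

/-- The transform of `g` with kernel `sgn⟪x, ξ⟫ ^ j |⟪x, ξ⟫| ^ q`; for `j = 0` this is the
`L^q`-cosine transform. Vector values allow the derivative to be a transform of the same kind. -/
def signedCosineTransform (μ : Measure E) (j : ℕ) (q : ℝ) (g : E → V) (x : E) : V :=
  ∫ ξ, signedRpow j q ⟪x, ξ⟫ • g ξ ∂μ

variable {μ : Measure E} [IsSphericalMeasure μ]

open IsSphericalMeasure

theorem norm_signedRpow_inner_smul_sub_le (hq : 0 < q) (hg : MemLp g ∞ μ) (y : E) : ∀ᵐ ξ ∂μ,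
    ‖signedRpow j q ⟪y, ξ⟫ • g ξ - signedRpow j q ⟪x, ξ⟫ • g ξ‖ ≤
      (q + 1) * lpNorm g ∞ μ * (|⟪x, ξ⟫| ^ (q - 1) + |⟪y, ξ⟫| ^ (q - 1)) * ‖y - x‖ := by
  filter_upwards [ae_norm_eq_one (μ := μ), ae_le_lpNorm_exponent_top hg] with ξ hξ hgξ
  have h_inner : |⟪y, ξ⟫ - ⟪x, ξ⟫| ≤ ‖y - x‖ := by
    simpa [inner_sub_left, hξ] using abs_real_inner_le_norm (y - x) ξ
  rw [← sub_smul, norm_smul]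
  calc |signedRpow j q ⟪y, ξ⟫ - signedRpow j q ⟪x, ξ⟫| * ‖g ξ‖
      ≤ (q + 1) * (|⟪x, ξ⟫| ^ (q - 1) + |⟪y, ξ⟫| ^ (q - 1)) * ‖y - x‖ * lpNorm g ∞ μ := by
        gcongr
        exact (abs_signedRpow_sub_le hq).trans (by gcongr)
    _ = _ := by ring

variable [BorelSpace E] [FiniteDimensional ℝ E]

theorem integrable_signedRpow_inner (hq : -1 < q) (hx : x ≠ 0) :
    Integrable (fun ξ => signedRpow j q ⟪x, ξ⟫) μ :=
  (integrable_abs_inner_rpow μ hq hx).mono'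
    (measurable_signedRpow.comp (by fun_prop)).aestronglyMeasurable
    (.of_forall fun _ => abs_signedRpow_le)

theorem integrable_signedRpow_inner_smul (hq : -1 < q) (hx : x ≠ 0) (hg : MemLp g ∞ μ) :
    Integrable (fun ξ => signedRpow j q ⟪x, ξ⟫ • g ξ) μ :=
  (integrable_signedRpow_inner hq hx).smul_of_top_left hg

theorem continuousAt_signedCosineTransform (hq : -1 < q) (hg : MemLp g ∞ μ) (hx : x ≠ 0) :
    ContinuousAt (signedCosineTransform μ j q g) x := by
  have h_int : ∀ y ≠ 0, Integrable (fun ξ => lpNorm g ∞ μ * |⟪y, ξ⟫| ^ q) μ := fun y hy =>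
    (integrable_abs_inner_rpow μ hq hy).const_mul _
  have h_le : ∀ y : E, ∀ᵐ ξ ∂μ,
      ‖signedRpow j q ⟪y, ξ⟫ • g ξ‖ ≤ lpNorm g ∞ μ * |⟪y, ξ⟫| ^ q := fun y => by
    filter_upwards [ae_le_lpNorm_exponent_top hg] with ξ hξ
    rw [norm_smul, mul_comm]
    exact mul_le_mul hξ abs_signedRpow_le (norm_nonneg _) lpNorm_nonneg
  have h_ne : ∀ᶠ y in 𝓝 x, y ≠ 0 := eventually_ne_nhds hx
  refine tendsto_integral_filter_of_tendsto_bound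
    (h_ne.mono fun y hy => (integrable_signedRpow_inner_smul hq hy hg).1)
    (integrable_signedRpow_inner_smul hq hx hg).1 (.of_forall h_le) (h_le x) ?_
    (h_ne.mono h_int) (h_int x hx) ?_ ?_
  · filter_upwards [ae_inner_ne_zero μ hx] with ξ hξ using continuousAt_signedRpow_inner_smul hξ
  · filter_upwards [ae_inner_ne_zero μ hx] with ξ hξ
    exact (continuousAt_abs_inner_rpow hξ).const_mul _
  · simp_rw [integral_const_mul]
    exact (continuousAt_integral_abs_inner_rpow μ hx).const_mul _

theorem memLp_smulRight_innerSL (hg : MemLp g ∞ μ) :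
    MemLp (fun ξ => (innerSL ℝ ξ).smulRight (g ξ)) ∞ μ := by
  refine memLp_top_of_bound ((ContinuousLinearMap.smulRightL ℝ E V).aestronglyMeasurable_comp₂
    (innerSL ℝ).continuous.aestronglyMeasurable hg.1) (lpNorm g ∞ μ) ?_
  filter_upwards [ae_norm_eq_one (μ := μ), ae_le_lpNorm_exponent_top hg] with ξ hξ hgξ
  simpa [hξ] using hgξ

theorem memLp_inner_smul (hg : MemLp g ∞ μ) (v : E) : MemLp (fun ξ => ⟪ξ, v⟫ • g ξ) ∞ μ :=
  (ContinuousLinearMap.apply ℝ V v).comp_memLp' (memLp_smulRight_innerSL hg)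

theorem hasFDerivAt_signedCosineTransform (hq : 0 < q) (hg : MemLp g ∞ μ) (hx : x ≠ 0) :
    HasFDerivAt (signedCosineTransform μ j q g)
      (q • signedCosineTransform μ (j + 1) (q - 1)
        (fun ξ => (innerSL ℝ ξ).smulRight (g ξ)) x) x := by
  have hq' : -1 < q - 1 := by linarith
  have h_ne : ∀ᶠ y in 𝓝 x, y ≠ 0 := eventually_ne_nhds hx
  have h_int := fun y hy => integrable_abs_inner_rpow μ (x := y) hq' hy
  rw [signedCosineTransform, ← integral_smul]
  refine hasFDerivAt_integral_of_tendsto_lipschitz_bound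
    (b := fun y ξ => (q + 1) * lpNorm g ∞ μ * (|⟪x, ξ⟫| ^ (q - 1) + |⟪y, ξ⟫| ^ (q - 1)))
    (h_ne.mono fun y hy => integrable_signedRpow_inner_smul (by linarith) hy hg)
    ((integrable_signedRpow_inner_smul hq' hx (memLp_smulRight_innerSL hg)).smul q)
    (.of_forall (norm_signedRpow_inner_smul_sub_le hq hg)) ?_
    (h_ne.mono fun y hy => ((h_int x hx).add (h_int y hy)).const_mul _)
    (.of_forall fun y => .of_forall fun ξ => ?_) ?_ ?_
  · filter_upwards [ae_inner_ne_zero μ hx] with ξ hξ using hasFDerivAt_signedRpow_inner_smul hξ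
  · exact mul_nonneg (mul_nonneg (by positivity) lpNorm_nonneg) (by positivity)
  · filter_upwards [ae_inner_ne_zero μ hx] with ξ hξ
    exact (continuousAt_const.add (continuousAt_abs_inner_rpow hξ)).const_mul _
  · simp_rw [integral_const_mul]
    have h_cont : ContinuousAt
        (fun y => (∫ ξ, |⟪x, ξ⟫| ^ (q - 1) ∂μ) + ∫ ξ, |⟪y, ξ⟫| ^ (q - 1) ∂μ) x :=
      continuousAt_const.add (continuousAt_integral_abs_inner_rpow μ hx)
    refine (h_cont.congr ?_).const_mul _
    filter_upwards [h_ne] with y hy using (integral_add (h_int x hx) (h_int y hy)).symm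

theorem fderiv_signedCosineTransform_apply (hq : 0 < q) (hg : MemLp g ∞ μ) (hx : x ≠ 0) (v : E) :
    fderiv ℝ (signedCosineTransform μ j q g) x v =
      q • signedCosineTransform μ (j + 1) (q - 1) (fun ξ => ⟪ξ, v⟫ • g ξ) x := by
  have h_int : Integrable (fun ξ => signedRpow (j + 1) (q - 1) ⟪x, ξ⟫ •
      (innerSL ℝ ξ).smulRight (g ξ)) μ :=
    integrable_signedRpow_inner_smul (by linarith) hx (memLp_smulRight_innerSL hg)
  rw [(hasFDerivAt_signedCosineTransform hq hg hx).fderiv, signedCosineTransform,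
    smul_apply, ContinuousLinearMap.integral_apply h_int]
  rfl

-- The induction replaces `V` by `E →L[ℝ] V`, so both spaces live in the same universe.
theorem contDiffOn_signedCosineTransform.{u} {E V : Type u} [NormedAddCommGroup E]
    [InnerProductSpace ℝ E] [FiniteDimensional ℝ E] [MeasurableSpace E] [BorelSpace E]
    [NormedAddCommGroup V] [NormedSpace ℝ V] {μ : Measure E} [IsSphericalMeasure μ] {g : E → V}
    {j m : ℕ} {q : ℝ} (hq : m < q + 1) (hg : MemLp g ∞ μ) :
    ContDiffOn ℝ m (signedCosineTransform μ j q g) {0}ᶜ := by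
  induction m generalizing V j q with
  | zero =>
    rw [Nat.cast_zero, contDiffOn_zero]
    exact fun x hx => (continuousAt_signedCosineTransform (by simpa [neg_lt_iff_pos_add] using hq)
      hg hx).continuousWithinAt
  | succ m ih =>
    push_cast at hq ⊢
    have hq₀ : 0 < q := m.cast_nonneg.trans_lt (by linarith)
    rw [contDiffOn_succ_iff_hasFDerivWithinAt_of_uniqueDiffOn isOpen_compl_singleton.uniqueDiffOn]
    refine ⟨by simp, _, ?_,
      fun x hx => (hasFDerivAt_signedCosineTransform hq₀ hg hx).hasFDerivWithinAt⟩
    exact (ih (by linarith) (memLp_smulRight_innerSL hg)).const_smul q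

end SignedCosineTransform

section PartialDerivatives

variable {n : ℕ} {μ : Measure (EuclideanSpace ℝ (Fin n))} [IsSphericalMeasure μ]
  {f : EuclideanSpace ℝ (Fin n) → ℝ} {p : ℝ} {L : List (Fin n)}

theorem memLp_prod_coord_mul (hf : MemLp f ∞ μ) (L : List (Fin n)) :
    MemLp (fun ξ => (L.map fun i => ξ i).prod * f ξ) ∞ μ := by
  induction L with
  | nil => simpa using hf
  | cons i L ih =>
    simpa [mul_assoc, EuclideanSpace.inner_single_right] using
      memLp_inner_smul ih (EuclideanSpace.single i 1)

theorem mpd_signedCosineTransform_zero (hf : MemLp f ∞ μ) (hL : (L.length : ℝ) < p + 1)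
    {x : EuclideanSpace ℝ (Fin n)} (hx : x ≠ 0) :
    mpd n L (signedCosineTransform μ 0 p f) x = (descPochhammer ℝ L.length).eval p *
      signedCosineTransform μ L.length (p - L.length)
        (fun ξ => (L.map fun i => ξ i).prod * f ξ) x := by
  induction L generalizing x with
  | nil => simp [mpd]
  | cons i L ih =>
    rw [List.length_cons, Nat.cast_succ] at hL
    have hq : 0 < p - L.length := by linarith
    have h_eq := (eventually_ne_nhds hx).mono fun y hy => ih (by linarith) hy
    have hg := memLp_prod_coord_mul hf L
    rw [mpd, pd, EventuallyEq.fderiv_eq h_eq,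
      fderiv_const_mul (hasFDerivAt_signedCosineTransform hq hg hx).differentiableAt,
      smul_apply, fderiv_signedCosineTransform_apply hq hg hx, List.length_cons,
      descPochhammer_succ_eval, Nat.cast_succ, ← sub_sub, smul_eq_mul, smul_eq_mul, mul_assoc]
    simp [mul_assoc, EuclideanSpace.inner_single_right]

end PartialDerivatives

section CosineConstant

theorem Cconst_eq_mul_Cconst_sub_two {t : ℝ} (h₀ : t ≠ 0) (h₁ : t ≠ 1) :
    Cconst t = -(t * (t - 1)) * Cconst (t - 2) := by
  have h_num : Gamma ((t + 1) / 2) = (t - 1) / 2 * Gamma ((t - 2 + 1) / 2) := by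
    rw [show (t + 1) / 2 = (t - 1) / 2 + 1 by ring,
      Gamma_add_one (div_ne_zero (sub_ne_zero.2 h₁) two_ne_zero)]
    ring_nf
  have h_den : Gamma (-(t - 2) / 2) = -t / 2 * Gamma (-t / 2) := by
    rw [show -(t - 2) / 2 = -t / 2 + 1 by ring,
      Gamma_add_one (div_ne_zero (neg_ne_zero.2 h₀) two_ne_zero)]
  have h_pow : (2 : ℝ) ^ (t + 1) = 4 * 2 ^ (t - 2 + 1) := by
    rw [show t + 1 = 2 + (t - 2 + 1) by ring, rpow_add two_pos]
    norm_num
  rw [Cconst, Cconst, h_num, h_den, h_pow]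
  field

theorem Cconst_ne_zero {t : ℝ} (h : -1 < t) (ht : ∀ k : ℕ, t ≠ 2 * k) : Cconst t ≠ 0 := by
  have h_num : 0 < Gamma ((t + 1) / 2) := Gamma_pos_of_pos (by linarith)
  have h_den : Gamma (-t / 2) ≠ 0 := Gamma_ne_zero fun m hm => ht m (by linarith)
  rw [Cconst]
  positivity

theorem neg_one_pow_mul_Cconst {p : ℝ} {m : ℕ} (hpe : ∀ k : ℕ, p ≠ 2 * k)
    (hm : 2 * (m : ℝ) < p + 1) :
    (-1) ^ m * Cconst p = (descPochhammer ℝ (2 * m)).eval p * Cconst (p - 2 * m) := by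
  induction m with
  | zero => simp
  | succ m ih =>
    push_cast at hm
    have h_step := Cconst_eq_mul_Cconst_sub_two (sub_ne_zero.2 (hpe m)) (t := p - 2 * m)
      (by linarith)
    rw [show p - 2 * (m : ℝ) - 2 = p - 2 * (m + 1) by ring] at h_step
    rw [mul_add_one, descPochhammer_succ_eval, descPochhammer_succ_eval]
    push_cast
    linear_combination (-1) * ih (by linarith) - (descPochhammer ℝ (2 * m)).eval p * h_step

theorem re_I_pow_mul_Cconst_div {p : ℝ} {k : ℕ} (hpe : ∀ k : ℕ, p ≠ 2 * k) (hk : Even k)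
    (hkp : k < p + 1) :
    (Complex.I ^ k).re * (Cconst p / Cconst (p - k)) = (descPochhammer ℝ k).eval p := by
  obtain ⟨m, rfl⟩ := even_iff_exists_two_mul.1 hk
  push_cast at hkp ⊢
  have h_ne : Cconst (p - 2 * m) ≠ 0 :=
    Cconst_ne_zero (by linarith) fun l hl => hpe (l + m) (by push_cast; linarith)
  have h_re : (Complex.I ^ (2 * m)).re = (-1) ^ m := by
    rw [pow_mul, Complex.I_sq]
    exact_mod_cast Complex.ofReal_re ((-1) ^ m)
  rw [h_re, ← mul_div_assoc, div_eq_iff h_ne, neg_one_pow_mul_Cconst hpe hkp]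

end CosineConstant

section SurfaceMeasure

variable {E : Type*} [NormedAddCommGroup E] [InnerProductSpace ℝ E]

theorem image_stereographic_symm_closedBall_mem_nhdsWithin {v : E} (hv : ‖-v‖ = 1) :
    (fun w => ((stereographic hv).symm w : E)) '' closedBall 0 1 ∈ 𝓝[sphere 0 1] v := by
  have hv_mem : v ∈ sphere 0 1 := by simpa using hv
  have h_zero : stereographic hv ⟨v, hv_mem⟩ = 0 := stereographic_neg_apply ⟨v, hv_mem⟩
  have h_symm_zero : (stereographic hv).symm 0 = ⟨v, hv_mem⟩ := by
    rw [← h_zero]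
    refine (stereographic hv).left_inv ?_
    simpa [Subtype.ext_iff] using ne_neg_of_mem_unit_sphere ℝ ⟨v, hv_mem⟩
  rw [nhdsWithin_eq_map_subtype_coe hv_mem, ← h_symm_zero, ← image_image Subtype.val]
  exact image_mem_map ((isOpenEmbedding_stereographic_symm hv).image_mem_nhds.2
    (closedBall_mem_nhds 0 one_pos))

variable [FiniteDimensional ℝ E]

theorem finrank_orthogonal_span_singleton_eq_sub_one {v : E} (hv : v ≠ 0) :
    (finrank ℝ (ℝ ∙ v)ᗮ : ℝ) = finrank ℝ E - 1 := by
  rw [← (ℝ ∙ v).finrank_add_finrank_orthogonal, finrank_span_singleton hv]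
  push_cast
  ring

variable [MeasurableSpace E] [BorelSpace E]

theorem hausdorffMeasure_sphere_lt_top : μH[(finrank ℝ E : ℝ) - 1] (sphere (0 : E) 1) < ∞ := by
  refine (isCompact_sphere 0 1).measure_lt_top_of_nhdsWithin fun v hv => ?_
  have hv_norm : ‖-v‖ = 1 := by simpa using hv
  have hv_ne : -v ≠ 0 := norm_ne_zero_iff.1 (hv_norm.trans_ne one_ne_zero)
  have h_contDiff : ContDiff ℝ 1 fun w => ((stereographic hv_norm).symm w : E) :=
    contDiff_stereoInvFunAux.comp (ℝ ∙ (-v))ᗮ.subtypeL.contDiff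
  obtain ⟨K, hK⟩ := h_contDiff.contDiffOn.exists_lipschitzOnWith one_ne_zero
    (convex_closedBall 0 1) (isCompact_closedBall 0 1)
  refine ⟨_, image_stereographic_symm_closedBall_mem_nhdsWithin hv_norm, ?_⟩
  rw [← finrank_orthogonal_span_singleton_eq_sub_one hv_ne]
  exact (hK.hausdorffMeasure_image_le (by positivity)).trans_lt
    (ENNReal.mul_lt_top (by finiteness) (isCompact_closedBall 0 1).measure_lt_top)

instance isSphericalMeasure_hausdorffMeasure_restrict_sphere :
    IsSphericalMeasure (μH[(finrank ℝ E : ℝ) - 1].restrict (sphere (0 : E) 1)) where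
  measure_univ_lt_top := by simpa using hausdorffMeasure_sphere_lt_top
  ae_norm_eq_one := by
    filter_upwards [ae_restrict_mem isClosed_sphere.measurableSet] with ξ hξ
    exact mem_sphere_zero_iff_norm.1 hξ
  measurePreserving R := by
    have h_preimage : R.toIsometryEquiv ⁻¹' sphere (0 : E) 1 = sphere 0 1 := by ext; simp
    have h_restrict :=
      (R.toIsometryEquiv.measurePreserving_hausdorffMeasure (finrank ℝ E - 1 : ℝ)).restrict_preimage
        (s := sphere (0 : E) 1) isClosed_sphere.measurableSet
    rwa [h_preimage] at h_restrict

end SurfaceMeasure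

section LpCosineTransform

open IsSphericalMeasure

theorem signedCosineTransform_of_even {E : Type*} [NormedAddCommGroup E] [InnerProductSpace ℝ E]
    [FiniteDimensional ℝ E] [MeasurableSpace E] [BorelSpace E] (μ : Measure E)
    [IsSphericalMeasure μ] {j : ℕ} (hj : Even j) (q : ℝ) (g : E → ℝ) {x : E} (hx : x ≠ 0) :
    signedCosineTransform μ j q g x = ∫ ξ, |⟪x, ξ⟫| ^ q * g ξ ∂μ := by
  refine integral_congr_ae ?_
  filter_upwards [ae_inner_ne_zero μ hx] with ξ hξ
  rw [signedRpow_of_even hj hξ, smul_eq_mul]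

theorem lp_cosine_differentiation_general {n : ℕ} {p : ℝ} (hpe : ∀ k : ℕ, p ≠ 2 * k)
    {f : EuclideanSpace ℝ (Fin n) → ℝ}
    (hf : MemLp f ∞ (μH[(n : ℝ) - 1].restrict (sphere (0 : EuclideanSpace ℝ (Fin n)) 1)))
    {H : EuclideanSpace ℝ (Fin n) → ℝ}
    (hH : ∀ x, H x = ∫ ξ in sphere (0 : EuclideanSpace ℝ (Fin n)) 1,
      |⟪x, ξ⟫| ^ p * f ξ ∂(μH[(n : ℝ) - 1]))
    {L : List (Fin n)} (hLe : Even L.length) (hLp : (L.length : ℝ) < p + 1) :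
    ContDiffOn ℝ L.length H {(0 : EuclideanSpace ℝ (Fin n))}ᶜ ∧
    ∀ x : EuclideanSpace ℝ (Fin n), x ≠ 0 →
      mpd n L H x = (Complex.I ^ L.length).re * (Cconst p / Cconst (p - L.length)) *
        ∫ ξ in sphere (0 : EuclideanSpace ℝ (Fin n)) 1,
          |⟪x, ξ⟫| ^ (p - (L.length : ℝ)) * (L.map fun i => ξ i).prod * f ξ
          ∂(μH[(n : ℝ) - 1]) := by
  have h_sphere : IsSphericalMeasure
      (μH[(n : ℝ) - 1].restrict (sphere (0 : EuclideanSpace ℝ (Fin n)) 1)) := by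
    simpa using isSphericalMeasure_hausdorffMeasure_restrict_sphere (E := EuclideanSpace ℝ (Fin n))
  set μ := μH[(n : ℝ) - 1].restrict (sphere (0 : EuclideanSpace ℝ (Fin n)) 1)
  obtain rfl : H = signedCosineTransform μ 0 p f := by
    ext x
    simp only [hH, signedCosineTransform, signedRpow_zero_left, smul_eq_mul]
  refine ⟨contDiffOn_signedCosineTransform hLp hf, fun x hx => ?_⟩
  rw [mpd_signedCosineTransform_zero hf hLp hx, re_I_pow_mul_Cconst_div hpe hLe hLp,
    signedCosineTransform_of_even μ hLe _ _ hx]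
  simp_rw [mul_assoc]

end LpCosineTransform

theorem lp_cosine_differentiation (n : ℕ) (hn : 2 ≤ n) (p : ℝ) (hp : 1 < p)
    (hpe : ∀ k : ℕ, p ≠ 2 * k)
    (f : EuclideanSpace ℝ (Fin n) → ℝ) (hf_meas : Measurable f)
    (hf_bdd : ∃ M : ℝ, ∀ ξ, |f ξ| ≤ M)
    (hf_even : ∀ ξ, f (-ξ) = f ξ)
    (H : EuclideanSpace ℝ (Fin n) → ℝ)
    (hH : ∀ x, H x = ∫ ξ in sphere (0 : EuclideanSpace ℝ (Fin n)) 1,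
      |⟪x, ξ⟫| ^ p * f ξ ∂(μH[(n : ℝ) - 1]))
    (L : List (Fin n)) (hLe : Even L.length) (hLp : (L.length : ℝ) < p + 1) :
    ContDiffOn ℝ L.length H {(0 : EuclideanSpace ℝ (Fin n))}ᶜ ∧
    ∀ x : EuclideanSpace ℝ (Fin n), x ≠ 0 →
      mpd n L H x = (Complex.I ^ L.length).re * (Cconst p / Cconst (p - L.length)) *
        ∫ ξ in sphere (0 : EuclideanSpace ℝ (Fin n)) 1,
          |⟪x, ξ⟫| ^ (p - (L.length : ℝ)) * (L.map fun i => ξ i).prod * f ξ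
          ∂(μH[(n : ℝ) - 1]) := by
  obtain ⟨M, hM⟩ := hf_bdd
  exact lp_cosine_differentiation_general hpe
    (memLp_top_of_bound hf_meas.aestronglyMeasurable M (ae_of_all _ hM)) hH hLe hLp
end
end

section
/- Let n ≥ 2, let p > 1 not be an even integer, and let f ∈ L^∞(S^{n-1}) satisfy f ≥ 0 and ∫_{S^{n-1}} f dξ > 0. Define H by H(x)^p = ∫_{S^{n-1}} |⟨x,ξ⟩|^p f(ξ) dξ, H ≥ 0. Then for every unit vector u ∈ S^{n-1} and every unit vector v ∈ S^{n-1} with v ≠ u and v ≠ −u, the second directional derivative of H in direction u evaluated at v is strictly positive: D_u^2 H(v) > 0. -/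
open MeasureTheory Real Set Metric
open scoped RealInnerProductSpace ENNReal MeasureTheory

noncomputable section

/-! With `φ(t) = ∫ |⟪v + t u, ξ⟫|^p f(ξ) dξ`, the function to differentiate is `φ^(1/p)`, and its
second derivative at `0` is `(p - 1) φ(0)^(1/p - 2)` times
`φ(0) ∫ |⟪v, ξ⟫|^(p-2) ⟪u, ξ⟫^2 f(ξ) dξ - (∫ |⟪v, ξ⟫|^(p-2) ⟪v, ξ⟫ ⟪u, ξ⟫ f(ξ) dξ)^2`,
the defect in the Cauchy-Schwarz inequality for the weight `|⟪v, ξ⟫|^(p-2) f(ξ)`. The inequality is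
strict because `v` and `u` are independent and great subspheres are null sets.

For `p < 2` the weight is singular, and differentiating twice under the integral sign requires that
`|⟪v, ξ⟫|^(-r)` be integrable over the sphere for `0 ≤ r < 1`. On a cap around a basis vector,
omitting the corresponding coordinate is antilipschitz, which reduces this to the integrability of
`|y|^(-r)` over a ball in one dimension less. -/

section DualityMap

variable {p x y : ℝ}

/-- The duality map `J_p(x) = |x|^(p-2) x` of the real line, that is, the derivative of
`|x|^p / p`. -/
def dualityMap (p x : ℝ) : ℝ := |x| ^ (p - 2) * x

@[fun_prop]
lemma measurable_dualityMap (p : ℝ) : Measurable (dualityMap p) := by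
  unfold dualityMap
  fun_prop

lemma dualityMap_neg (p x : ℝ) : dualityMap p (-x) = -dualityMap p x := by
  simp [dualityMap]

lemma dualityMap_mul (p x y : ℝ) :
    dualityMap p (x * y) = dualityMap p x * dualityMap p y := by
  simp only [dualityMap, abs_mul, mul_rpow (abs_nonneg x) (abs_nonneg y)]
  ring

lemma dualityMap_of_nonneg (hp : p ≠ 1) (hx : 0 ≤ x) : dualityMap p x = x ^ (p - 1) := by
  rcases hx.eq_or_lt with rfl | hx
  · simp [dualityMap, zero_rpow (sub_ne_zero.2 hp)]
  · rw [dualityMap, abs_of_pos hx, ← rpow_add_one hx.ne']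
    ring_nf

lemma abs_dualityMap (hp : p ≠ 1) (x : ℝ) : |dualityMap p x| = |x| ^ (p - 1) := by
  rw [← dualityMap_of_nonneg hp (abs_nonneg x), dualityMap, dualityMap, abs_mul, abs_abs,
    abs_of_nonneg (rpow_nonneg (abs_nonneg x) _)]

lemma abs_dualityMap_mul_le {R : ℝ} (hp : 1 < p) (hx : |x| ≤ R) (hy : |y| ≤ R) :
    |dualityMap p x * y| ≤ R ^ p := by
  have hR : 0 ≤ R := (abs_nonneg x).trans hx
  calc |dualityMap p x * y| = |x| ^ (p - 1) * |y| := by rw [abs_mul, abs_dualityMap hp.ne']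
    _ ≤ R ^ (p - 1) * R := by gcongr
    _ = R ^ p := by rw [← rpow_add_one' hR (by linarith), sub_add_cancel]

lemma abs_rpow_eq_abs_rpow_sub_two_mul_sq (hp : p ≠ 0) (x : ℝ) :
    |x| ^ p = |x| ^ (p - 2) * x ^ 2 := by
  rcases eq_or_ne x 0 with rfl | hx
  · simp [zero_rpow hp]
  · rw [← sq_abs x, ← rpow_add_natCast (abs_ne_zero.2 hx)]
    norm_num

lemma hasDerivAt_dualityMap_zero (hp : 2 ≤ p) :
    HasDerivAt (dualityMap p) ((p - 1) * |0| ^ (p - 2)) 0 := by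
  have hcont : Continuous fun t : ℝ => |t| ^ (p - 2) :=
    continuous_abs.rpow_const fun _ => Or.inr (sub_nonneg.2 hp)
  have hlim : |(0 : ℝ)| ^ (p - 2) = (p - 1) * |0| ^ (p - 2) := by
    rcases hp.eq_or_lt with rfl | hp
    · norm_num
    · simp [zero_rpow (sub_pos.2 hp).ne']
  rw [hasDerivAt_iff_tendsto_slope_zero, ← hlim]
  refine (hcont.tendsto 0 |>.mono_left nhdsWithin_le_nhds).congr' ?_
  filter_upwards [self_mem_nhdsWithin] with t ht
  rw [mem_compl_singleton_iff] at ht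
  simp only [dualityMap, zero_add, mul_zero, sub_zero, smul_eq_mul]
  field_simp

lemma hasDerivAt_dualityMap (h : x ≠ 0 ∨ 2 ≤ p) :
    HasDerivAt (dualityMap p) ((p - 1) * |x| ^ (p - 2)) x := by
  rcases eq_or_ne x 0 with rfl | hx
  · exact hasDerivAt_dualityMap_zero (h.resolve_left (not_not.2 rfl))
  have hpow : |x| ^ (p - 2) = |x| ^ (p - 2 - 1) * |x| := by
    rw [← rpow_add_one (abs_ne_zero.2 hx), sub_add_cancel]
  have hderiv := ((hasDerivAt_abs hx).rpow_const (p := p - 2) (Or.inl (abs_ne_zero.2 hx))).mul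
    (hasDerivAt_id' x)
  refine hderiv.congr_deriv ?_
  rw [hpow]
  linear_combination (p - 2) * |x| ^ (p - 2 - 1) * sign_mul_self x

lemma abs_dualityMap_sub_le_of_two_le {R : ℝ} (hp : 2 ≤ p) (hx : |x| ≤ R) (hy : |y| ≤ R) :
    |dualityMap p y - dualityMap p x| ≤ (p - 1) * R ^ (p - 2) * |y - x| := by
  refine (convex_Icc (-R) R).norm_image_sub_le_of_norm_hasDerivWithin_le
    (fun z _ => (hasDerivAt_dualityMap (Or.inr hp)).hasDerivWithinAt) (fun z hz => ?_)
    (abs_le.1 hx) (abs_le.1 hy)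
  have hzR : |z| ^ (p - 2) ≤ R ^ (p - 2) :=
    rpow_le_rpow (abs_nonneg z) (abs_le.2 hz) (sub_nonneg.2 hp)
  rw [norm_mul, norm_of_nonneg (by linarith : 0 ≤ p - 1), norm_of_nonneg (by positivity)]
  gcongr
  linarith

lemma abs_rpow_sub_one_le {q : ℝ} (hq : 0 ≤ q) (hq' : q ≤ 1) (hx : 0 ≤ x) :
    |x ^ q - 1| ≤ |x - 1| := by
  rcases le_total x 1 with h | h
  · rw [abs_of_nonpos (sub_nonpos.2 (rpow_le_one hx h hq)), abs_of_nonpos (sub_nonpos.2 h)]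
    linarith [rpow_one x ▸ Real.rpow_le_rpow_of_exponent_ge' hx h hq hq']
  · rw [abs_of_nonneg (sub_nonneg.2 (one_le_rpow h hq)), abs_of_nonneg (sub_nonneg.2 h)]
    linarith [rpow_one x ▸ Real.rpow_le_rpow_of_exponent_le h hq']

lemma abs_dualityMap_sub_one_le (hp : 1 < p) (hp' : p ≤ 2) (x : ℝ) :
    |dualityMap p x - 1| ≤ 2 * |x - 1| := by
  rcases le_total 0 x with hx | hx
  · rw [dualityMap_of_nonneg hp.ne' hx]
    linarith [abs_rpow_sub_one_le (sub_nonneg.2 hp.le) (by linarith) hx, abs_nonneg (x - 1)]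
  · obtain ⟨s, rfl⟩ : ∃ s, x = -s := ⟨-x, (neg_neg x).symm⟩
    have hs : 0 ≤ s := neg_nonpos.1 hx
    have hpow : s ^ (p - 1) ≤ 1 + (p - 1) * (s - 1) := by
      simpa using rpow_one_add_le_one_add_mul_self (s := s - 1) (by linarith)
        (sub_nonneg.2 hp.le) (by linarith : p - 1 ≤ 1)
    rw [dualityMap_neg, dualityMap_of_nonneg hp.ne' hs, abs_of_nonpos (by linarith : -s - 1 ≤ 0),
      abs_of_nonpos (by linarith [rpow_nonneg hs (p - 1)])]
    nlinarith

lemma abs_dualityMap_sub_le_of_le_two (hp : 1 < p) (hp' : p ≤ 2) (hx : x ≠ 0) (y : ℝ) :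
    |dualityMap p y - dualityMap p x| ≤ 2 * |x| ^ (p - 2) * |y - x| := by
  obtain ⟨r, rfl⟩ : ∃ r, y = x * r := ⟨y / x, (mul_div_cancel₀ y hx).symm⟩
  calc |dualityMap p (x * r) - dualityMap p x|
      = |x| ^ (p - 2) * |x| * |dualityMap p r - 1| := by
        rw [dualityMap_mul, ← mul_sub_one, abs_mul, dualityMap, abs_mul,
          abs_of_nonneg (rpow_nonneg (abs_nonneg x) _)]
    _ ≤ |x| ^ (p - 2) * |x| * (2 * |r - 1|) := by
        gcongr
        exact abs_dualityMap_sub_one_le hp hp' r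
    _ = 2 * |x| ^ (p - 2) * |x * r - x| := by
        rw [← mul_sub_one, abs_mul]
        ring

/- For `p < 2` the Lipschitz constant degenerates at the base point `x` only, so the bound keeps
the weight `|x|^(p-2)` of the second derivative; for `p ≥ 2` it stays below the `p`-th power. -/
lemma abs_dualityMap_add_mul_sub_mul_le {t : ℝ} (hp : 1 < p) (hx : x ≠ 0) (ht : |t| ≤ 1) :
    |(dualityMap p (x + t * y) - dualityMap p x) * y| ≤
      (2 * (|x| ^ (p - 2) * y ^ 2) + (p - 1) * (|x| + |y|) ^ p) * |t| := by
  have : 0 ≤ p - 1 := sub_nonneg.2 hp.le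
  have hyy : |y| * |y| = y ^ 2 := by rw [← sq, sq_abs]
  rw [abs_mul]
  rcases le_total p 2 with h2 | h2
  · have hlip := abs_dualityMap_sub_le_of_le_two hp h2 hx (x + t * y)
    rw [add_sub_cancel_left, abs_mul] at hlip
    calc _ ≤ 2 * |x| ^ (p - 2) * (|t| * |y|) * |y| := by gcongr
      _ = (2 * (|x| ^ (p - 2) * y ^ 2) + 0) * |t| := by rw [← hyy]; ring
      _ ≤ _ := by gcongr; positivity
  · have hty : |t * y| ≤ |y| := by
      rw [abs_mul]
      exact mul_le_of_le_one_left (abs_nonneg y) ht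
    have hlip := abs_dualityMap_sub_le_of_two_le h2 (le_add_of_nonneg_right (abs_nonneg y))
      ((abs_add_le x (t * y)).trans (add_le_add_right hty |x|))
    rw [add_sub_cancel_left, abs_mul] at hlip
    have hpow : (|x| + |y|) ^ (p - 2) * y ^ 2 ≤ (|x| + |y|) ^ p := by
      rw [← abs_of_nonneg (by positivity : 0 ≤ |x| + |y|),
        abs_rpow_eq_abs_rpow_sub_two_mul_sq (by linarith : p ≠ 0) (|x| + |y|), ← sq_abs y]
      gcongr
      exact le_add_of_nonneg_left (abs_nonneg x)
    calc _ ≤ (p - 1) * (|x| + |y|) ^ (p - 2) * (|t| * |y|) * |y| := by gcongr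
      _ = (0 + (p - 1) * ((|x| + |y|) ^ (p - 2) * y ^ 2)) * |t| := by rw [← hyy]; ring
      _ ≤ _ := by gcongr; positivity

end DualityMap

section LpIntegral

open Filter Topology

lemma hasDerivAt_integral_of_lip_at {α 𝕜 E : Type*} [MeasurableSpace α] {μ : Measure α} [RCLike 𝕜]
    [NormedAddCommGroup E] [NormedSpace ℝ E] [NormedSpace 𝕜 E] {F : 𝕜 → α → E} {F' : α → E}
    {bound : α → ℝ} {x₀ : 𝕜} {s : Set 𝕜} (hs : s ∈ 𝓝 x₀)
    (hF_meas : ∀ x ∈ s, AEStronglyMeasurable (F x) μ) (hF_int : Integrable (F x₀) μ)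
    (hF'_meas : AEStronglyMeasurable F' μ)
    (h_lip : ∀ᵐ a ∂μ, ∀ x ∈ s, ‖F x a - F x₀ a‖ ≤ bound a * ‖x - x₀‖)
    (bound_integrable : Integrable bound μ)
    (h_diff : ∀ᵐ a ∂μ, HasDerivAt (F · a) (F' a) x₀) :
    HasDerivAt (fun x => ∫ a, F x a ∂μ) (∫ a, F' a ∂μ) x₀ := by
  let L : E ≃L[𝕜] 𝕜 →L[𝕜] E := ContinuousLinearMap.toSpanSingletonCLE
  have hF := (hasFDerivAt_integral_of_dominated_loc_of_lip' hs hF_meas hF_int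
    (L.continuous.comp_aestronglyMeasurable hF'_meas) h_lip bound_integrable
    (h_diff.mono fun a ha => ha.hasFDerivAt)).2
  exact hF.congr_fderiv (L.integral_comp_comm F')

variable {α : Type*} [MeasurableSpace α] {ν : Measure α} {p : ℝ} {a b w : α → ℝ}

lemma integrable_abs_add_abs_rpow (hp : 0 < p) (ha : MemLp a (ENNReal.ofReal p) ν)
    (hb : MemLp b (ENNReal.ofReal p) ν) : Integrable (fun x => (|a x| + |b x|) ^ p) ν := by
  have h := (ha.norm.add hb.norm).integrable_norm_rpow (by simpa using hp) ENNReal.ofReal_ne_top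
  rw [ENNReal.toReal_ofReal hp.le] at h
  refine h.congr (ae_of_all _ fun x => ?_)
  simp only [Pi.add_apply, norm_eq_abs]
  rw [abs_of_nonneg (by positivity)]

lemma integrable_dualityMap_mul (hp : 1 < p) (ha : MemLp a (ENNReal.ofReal p) ν)
    (hb : MemLp b (ENNReal.ofReal p) ν) : Integrable (fun x => dualityMap p (a x) * b x) ν :=
  (integrable_abs_add_abs_rpow (zero_lt_one.trans hp) ha hb).mono'
    (((measurable_dualityMap p).comp_aemeasurable ha.aemeasurable).mul
      hb.aemeasurable).aestronglyMeasurable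
    (ae_of_all _ fun _ => abs_dualityMap_mul_le hp (le_add_of_nonneg_right (abs_nonneg _))
      (le_add_of_nonneg_left (abs_nonneg _)))

lemma hasDerivAt_integral_abs_add_mul_rpow (hp : 1 < p) (ha : MemLp a (ENNReal.ofReal p) ν)
    (hb : MemLp b (ENNReal.ofReal p) ν) (t : ℝ) :
    HasDerivAt (fun s => ∫ x, |a x + s * b x| ^ p ∂ν)
      (p * ∫ x, dualityMap p (a x + t * b x) * b x ∂ν) t := by
  have ham := ha.aemeasurable
  have hbm := hb.aemeasurable
  have hp₀ : 0 < p := zero_lt_one.trans hp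
  rw [← integral_const_mul]
  refine (hasDerivAt_integral_of_dominated_loc_of_deriv_le
    (bound := fun x => p * (|a x| + |(|t| + 1) * b x|) ^ p)
    (F' := fun s x => p * (dualityMap p (a x + s * b x) * b x))
    (ball_mem_nhds t one_pos) (Eventually.of_forall fun s => ?_) ?_ ?_
    (ae_of_all _ fun x s hs => ?_) ?_ (ae_of_all _ fun x s _ => ?_)).2
  · exact AEMeasurable.aestronglyMeasurable (by fun_prop)
  · simpa [hp₀.le] using
      (ha.add (hb.const_mul t)).integrable_norm_rpow (by simpa using hp₀) ENNReal.ofReal_ne_top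
  · exact AEMeasurable.aestronglyMeasurable (by fun_prop)
  · have hst : |s| ≤ |t| + 1 := by
      have := abs_sub_abs_le_abs_sub s t
      rw [mem_ball, dist_eq] at hs
      linarith
    rw [norm_mul, norm_of_nonneg hp₀.le, abs_mul, abs_of_nonneg (by positivity : 0 ≤ |t| + 1)]
    gcongr
    refine abs_dualityMap_mul_le hp ((abs_add_le _ _).trans ?_) ?_
    · rw [abs_mul]
      gcongr
    · nlinarith [abs_nonneg (a x), abs_nonneg (b x), abs_nonneg t]
  · exact (integrable_abs_add_abs_rpow hp₀ ha (hb.const_mul _)).const_mul p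
  · refine ((hasDerivAt_abs_rpow _ hp).comp s
      (((hasDerivAt_id' s).mul_const (b x)).const_add (a x))).congr_deriv ?_
    rw [dualityMap]
    ring

lemma hasDerivAt_integral_dualityMap_add_mul_mul (hp : 1 < p) (ha : MemLp a (ENNReal.ofReal p) ν)
    (hb : MemLp b (ENNReal.ofReal p) ν) (ha₀ : ∀ᵐ x ∂ν, a x ≠ 0)
    (hint : Integrable (fun x => |a x| ^ (p - 2) * b x ^ 2) ν) :
    HasDerivAt (fun t => ∫ x, dualityMap p (a x + t * b x) * b x ∂ν)
      ((p - 1) * ∫ x, |a x| ^ (p - 2) * b x ^ 2 ∂ν) 0 := by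
  have ham := ha.aemeasurable
  have hbm := hb.aemeasurable
  rw [← integral_const_mul]
  refine hasDerivAt_integral_of_lip_at (closedBall_mem_nhds 0 one_pos) (fun t _ => ?_) ?_
    (hint.const_mul _).aestronglyMeasurable ?_
    ((hint.const_mul 2).add
      ((integrable_abs_add_abs_rpow (zero_lt_one.trans hp) ha hb).const_mul (p - 1))) ?_
  · exact AEMeasurable.aestronglyMeasurable (by fun_prop)
  · simpa using integrable_dualityMap_mul hp ha hb
  · filter_upwards [ha₀] with x hx t ht
    rw [mem_closedBall, dist_zero_right] at ht
    simpa [sub_mul] using abs_dualityMap_add_mul_sub_mul_le (y := b x) hp hx ht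
  · filter_upwards [ha₀] with x hx
    have hJ : HasDerivAt (dualityMap p) ((p - 1) * |a x| ^ (p - 2)) (a x + 0 * b x) := by
      simpa using hasDerivAt_dualityMap (Or.inl hx)
    refine ((hJ.comp 0 (((hasDerivAt_id' 0).mul_const (b x)).const_add (a x))).mul_const
      (b x)).congr_deriv ?_
    ring

lemma integral_mul_sq_pos {g : α → ℝ} (hw : ∀ᵐ x ∂ν, 0 < w x)
    (hint : Integrable (fun x => w x * g x ^ 2) ν) (hg : ¬ g =ᵐ[ν] 0) :
    0 < ∫ x, w x * g x ^ 2 ∂ν := by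
  have hnonneg : 0 ≤ᵐ[ν] fun x => w x * g x ^ 2 :=
    hw.mono fun x hx => mul_nonneg hx.le (sq_nonneg _)
  refine (integral_nonneg_of_ae hnonneg).lt_of_ne' fun h => hg ?_
  filter_upwards [hw, (integral_eq_zero_iff_of_nonneg_ae hnonneg hint).1 h] with x hx hgx
  simpa [hx.ne'] using hgx

lemma sq_integral_mul_lt_integral_mul_integral (hw : ∀ᵐ x ∂ν, 0 < w x)
    (haa : Integrable (fun x => w x * a x ^ 2) ν)
    (hab : Integrable (fun x => w x * (a x * b x)) ν)
    (hbb : Integrable (fun x => w x * b x ^ 2) ν)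
    (hli : ∀ s t : ℝ, (∀ᵐ x ∂ν, s * a x + t * b x = 0) → s = 0 ∧ t = 0) :
    (∫ x, w x * (a x * b x) ∂ν) ^ 2 < (∫ x, w x * a x ^ 2 ∂ν) * ∫ x, w x * b x ^ 2 ∂ν := by
  set A := ∫ x, w x * a x ^ 2 ∂ν
  set B := ∫ x, w x * (a x * b x) ∂ν
  set C := ∫ x, w x * b x ^ 2 ∂ν
  have hexp (s t : ℝ) : (fun x => w x * (s * a x + t * b x) ^ 2) = fun x =>
      s ^ 2 * (w x * a x ^ 2) + 2 * s * t * (w x * (a x * b x)) + t ^ 2 * (w x * b x ^ 2) := by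
    ext x
    ring
  have hquad (s t : ℝ) (hst : ¬ (s = 0 ∧ t = 0)) : 0 < s ^ 2 * A + 2 * s * t * B + t ^ 2 * C := by
    have h12 : Integrable (fun x =>
        s ^ 2 * (w x * a x ^ 2) + 2 * s * t * (w x * (a x * b x))) ν :=
      (haa.const_mul _).add (hab.const_mul _)
    have h3 := hbb.const_mul (t ^ 2)
    have hpos := integral_mul_sq_pos (g := fun x => s * a x + t * b x) hw
      (by rw [hexp]; exact h12.add h3) (fun h => hst (hli s t h))
    rw [hexp, integral_add h12 h3, integral_add (haa.const_mul _) (hab.const_mul _)] at hpos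
    simpa only [integral_const_mul] using hpos
  have hC : 0 < C := by simpa using hquad 0 1 (by simp)
  have hdisc : 0 < C * (A * C - B ^ 2) := by
    linear_combination hquad C (-B) (fun h => hC.ne' h.1)
  exact sub_pos.1 (pos_of_mul_pos_right hdisc hC.le)

lemma iteratedDeriv_two_rpow {φ φ' : ℝ → ℝ} {φ'' r x : ℝ}
    (hφ : ∀ᶠ y in 𝓝 x, HasDerivAt φ (φ' y) y) (hφ' : HasDerivAt φ' φ'' x) (hpos : 0 < φ x) :
    iteratedDeriv 2 (fun y => φ y ^ r) x =
      r * φ x ^ (r - 2) * (φ x * φ'' + (r - 1) * φ' x ^ 2) := by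
  have hφx := hφ.self_of_nhds
  have hderiv : deriv (fun y => φ y ^ r) =ᶠ[𝓝 x] fun y => φ' y * r * φ y ^ (r - 1) := by
    filter_upwards [hφ, hφx.continuousAt.eventually (lt_mem_nhds hpos)] with y hy hy₀
    exact (hy.rpow_const (Or.inl hy₀.ne')).deriv
  have hpow : φ x ^ (r - 1) = φ x ^ (r - 2) * φ x := by
    rw [← rpow_add_one hpos.ne']
    ring_nf
  have hderiv₂ : HasDerivAt (fun y => φ' y * r * φ y ^ (r - 1))
      (r * φ x ^ (r - 2) * (φ x * φ'' + (r - 1) * φ' x ^ 2)) x := by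
    refine ((hφ'.mul_const r).mul (hφx.rpow_const (Or.inl hpos.ne'))).congr_deriv ?_
    rw [hpow, show r - 1 - 1 = r - 2 by ring]
    ring
  rw [iteratedDeriv_succ, iteratedDeriv_one, hderiv.deriv_eq, hderiv₂.deriv]

lemma iteratedDeriv_two_integral_rpow (hp : 1 < p) (ha : MemLp a (ENNReal.ofReal p) ν)
    (hb : MemLp b (ENNReal.ofReal p) ν) (ha₀ : ∀ᵐ x ∂ν, a x ≠ 0)
    (hint : Integrable (fun x => |a x| ^ (p - 2) * b x ^ 2) ν) (hpos : 0 < ∫ x, |a x| ^ p ∂ν) :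
    iteratedDeriv 2 (fun t => (∫ x, |a x + t * b x| ^ p ∂ν) ^ (1 / p)) 0 =
      (p - 1) * (∫ x, |a x| ^ p ∂ν) ^ (1 / p - 2) *
        ((∫ x, |a x| ^ p ∂ν) * (∫ x, |a x| ^ (p - 2) * b x ^ 2 ∂ν) -
          (∫ x, dualityMap p (a x) * b x ∂ν) ^ 2) := by
  rw [iteratedDeriv_two_rpow
    (Filter.Eventually.of_forall (hasDerivAt_integral_abs_add_mul_rpow hp ha hb))
    ((hasDerivAt_integral_dualityMap_add_mul_mul hp ha hb ha₀ hint).const_mul p)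
    (by simpa using hpos)]
  simp only [zero_mul, add_zero]
  field_simp
  ring

theorem iteratedDeriv_two_integral_rpow_pos (hp : 1 < p) (ha : MemLp a (ENNReal.ofReal p) ν)
    (hb : MemLp b (ENNReal.ofReal p) ν) (ha₀ : ∀ᵐ x ∂ν, a x ≠ 0)
    (hint : Integrable (fun x => |a x| ^ (p - 2) * b x ^ 2) ν)
    (hli : ∀ s t : ℝ, (∀ᵐ x ∂ν, s * a x + t * b x = 0) → s = 0 ∧ t = 0) :
    0 < iteratedDeriv 2 (fun t => (∫ x, |a x + t * b x| ^ p ∂ν) ^ (1 / p)) 0 := by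
  have hp₀ : 0 < p := zero_lt_one.trans hp
  have hw : ∀ᵐ x ∂ν, 0 < |a x| ^ (p - 2) := ha₀.mono fun x hx => rpow_pos_of_pos (abs_pos.2 hx) _
  have hpow (x : α) : |a x| ^ p = |a x| ^ (p - 2) * a x ^ 2 :=
    abs_rpow_eq_abs_rpow_sub_two_mul_sq hp₀.ne' (a x)
  have haa : Integrable (fun x => |a x| ^ (p - 2) * a x ^ 2) ν := by
    simpa [← hpow, hp₀.le] using
      ha.integrable_norm_rpow (by simpa using hp₀) ENNReal.ofReal_ne_top
  have hA : 0 < ∫ x, |a x| ^ p ∂ν := by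
    simp only [hpow]
    exact integral_mul_sq_pos hw haa
      fun h => one_ne_zero (hli 1 0 (h.mono fun x hx => by simp [hx])).1
  have hCS := sq_integral_mul_lt_integral_mul_integral hw haa
    (by simpa [dualityMap, mul_assoc] using integrable_dualityMap_mul hp ha hb) hint hli
  simp only [← hpow, ← mul_assoc] at hCS
  rw [iteratedDeriv_two_integral_rpow hp ha hb ha₀ hint hA]
  exact mul_pos (mul_pos (sub_pos.2 hp) (rpow_pos_of_pos hA _)) (sub_pos.2 hCS)

end LpIntegral

section Sphere

open Module NNReal

lemma lintegral_closedBall_enorm_rpow_lt_top {r : ℝ} (hr : r < 1) :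
    ∫⁻ y in closedBall (0 : ℝ) 1, ‖y‖ₑ ^ (-r) < ⊤ := by
  have hint : IntegrableOn (fun y : ℝ => |y| ^ (-r)) (closedBall 0 1) :=
    (locallyIntegrable_of_norm_le_rpow (C := 1) (α := r) (by simp) (by simpa using hr)
      (ae_of_all _ fun y => by simp [abs_of_nonneg (rpow_nonneg (abs_nonneg y) _)])
      (by fun_prop : Measurable _).aestronglyMeasurable).integrableOn_isCompact
        (isCompact_closedBall 0 1)
  refine (lintegral_congr_ae (ae_restrict_of_ae ?_)).trans_lt hint.hasFiniteIntegral
  filter_upwards [Measure.ae_ne volume 0] with y hy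
  rw [enorm_eq_ofReal_abs, enorm_eq_ofReal (rpow_nonneg (abs_nonneg y) _),
    ENNReal.ofReal_rpow_of_pos (abs_pos.2 hy)]

lemma lintegral_closedBall_pi_enorm_apply_rpow_lt_top {κ : Type*} [Fintype κ] {r : ℝ} (hr : r < 1)
    (j : κ) : ∫⁻ y in closedBall (0 : κ → ℝ) 1, ‖y j‖ₑ ^ (-r) < ⊤ := by
  classical
  have heval : ∫⁻ z, ‖z‖ₑ ^ (-r) ∂((volume.restrict (closedBall (0 : κ → ℝ) 1)).map
      (Function.eval j)) < ⊤ := by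
    rw [closedBall_pi _ zero_le_one, volume_pi, Measure.restrict_pi_pi, Measure.pi_map_eval,
      lintegral_smul_measure]
    exact ENNReal.mul_lt_top (ENNReal.prod_lt_top fun _ _ => by simp)
      (lintegral_closedBall_enorm_rpow_lt_top hr)
  rwa [lintegral_map (by fun_prop) (by fun_prop)] at heval

lemma setLIntegral_hausdorffMeasure_comp_le {X Y : Type*} [EMetricSpace X] [MeasurableSpace X]
    [BorelSpace X] [EMetricSpace Y] [MeasurableSpace Y] [BorelSpace Y] {P : X → Y} {s : Set X}
    {T : Set Y} {K : ℝ≥0} {d : ℝ} (hd : 0 ≤ d) (hP : Measurable P)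
    (hK : AntilipschitzWith K (s.domRestrict P)) (hsT : MapsTo P s T) {g : Y → ℝ≥0∞}
    (hg : Measurable g) :
    ∫⁻ x in s, g (P x) ∂μH[d] ≤ K ^ d * ∫⁻ y in T, g y ∂μH[d] := by
  have hmap : ((μH[d] : Measure X).restrict s).map P ≤ (K : ℝ≥0∞) ^ d • μH[d].restrict T := by
    refine Measure.le_iff.2 fun A hA => ?_
    have himage : P ⁻¹' A ∩ s = Subtype.val '' (s.domRestrict P ⁻¹' (A ∩ T)) := by
      ext x
      simp only [mem_inter_iff, mem_preimage, mem_image, Subtype.exists,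
        exists_and_right, exists_eq_right]
      exact ⟨fun h => ⟨h.2, h.1, hsT h.2⟩, fun ⟨hx, hA, _⟩ => ⟨hA, hx⟩⟩
    rw [Measure.map_apply hP hA, Measure.restrict_apply (hP hA), himage,
      isometry_subtype_coe.hausdorffMeasure_image (Or.inl hd), Measure.smul_apply,
      Measure.restrict_apply hA, smul_eq_mul]
    exact hK.hausdorffMeasure_preimage_le hd _
  calc ∫⁻ x in s, g (P x) ∂μH[d] = ∫⁻ y, g y ∂((μH[d].restrict s).map P) :=
        (lintegral_map hg hP).symm
    _ ≤ ∫⁻ y, g y ∂((K : ℝ≥0∞) ^ d • μH[d].restrict T) := lintegral_mono' hmap le_rfl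
    _ = K ^ d * ∫⁻ y in T, g y ∂μH[d] := lintegral_smul_measure _ _

variable {E : Type*} [NormedAddCommGroup E] [InnerProductSpace ℝ E]

/-- The closed cap `{ξ ∈ sphere | c ≤ ⟪e, ξ⟫}` of the unit sphere around the direction `e`. -/
def sphericalCap (e : E) (c : ℝ) : Set E :=
  {ξ ∈ sphere (0 : E) 1 | c ≤ ⟪e, ξ⟫}

variable {ι : Type*} [Fintype ι]

/-- The coordinates of a vector in an orthonormal basis, with the `k`-th one left out: the chart in
which a cap around `b k` is compared with a ball in one dimension less. -/
def omitCoord (b : OrthonormalBasis ι ℝ E) (k : ι) (ξ : E) : {j // j ≠ k} → ℝ :=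
  fun j => ⟪b j, ξ⟫

lemma sphere_subset_iUnion_sphericalCap (b : OrthonormalBasis ι ℝ E) :
    sphere (0 : E) 1 ⊆ ⋃ k, (sphericalCap (b k) √(Fintype.card ι : ℝ)⁻¹ ∪
      sphericalCap (-b k) √(Fintype.card ι : ℝ)⁻¹) := by
  intro ξ hξ
  have hsum : ∑ k, ⟪b k, ξ⟫ ^ 2 = 1 := by
    rw [b.sum_sq_inner_right, mem_sphere_zero_iff_norm.1 hξ, one_pow]
  have hι : (Finset.univ : Finset ι).Nonempty := Finset.nonempty_of_sum_ne_zero (hsum ▸ one_ne_zero)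
  have hcard : (Fintype.card ι : ℝ) ≠ 0 := by
    exact_mod_cast hι.card_pos.ne'
  obtain ⟨k, -, hk⟩ := Finset.exists_le_of_sum_le (f := fun _ : ι => (Fintype.card ι : ℝ)⁻¹) hι
    (by simp [hsum, hcard] : _ ≤ ∑ k, ⟪b k, ξ⟫ ^ 2)
  have hle : √(Fintype.card ι : ℝ)⁻¹ ≤ |⟪b k, ξ⟫| := sqrt_sq_eq_abs ⟪b k, ξ⟫ ▸ sqrt_le_sqrt hk
  refine mem_iUnion.2 ⟨k, (le_abs.1 hle).imp (fun h => ⟨hξ, h⟩) fun h => ⟨hξ, ?_⟩⟩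
  rwa [inner_neg_left]

lemma measurable_omitCoord [MeasurableSpace E] [BorelSpace E] (b : OrthonormalBasis ι ℝ E)
    (k : ι) : Measurable (omitCoord b k) :=
  have : FiniteDimensional ℝ E := b.toBasis.finiteDimensional_of_finite
  measurable_pi_lambda _ fun _ => (continuous_const.inner continuous_id).measurable

section DecidableEq

variable [DecidableEq ι]

lemma mapsTo_omitCoord (b : OrthonormalBasis ι ℝ E) (k : ι) :
    MapsTo (omitCoord b k) (sphere 0 1) (closedBall 0 1) := by
  intro ξ hξ
  rw [mem_sphere_zero_iff_norm] at hξ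
  rw [mem_closedBall_zero_iff, pi_norm_le_iff_of_nonneg zero_le_one]
  intro j
  simpa [omitCoord, hξ] using norm_inner_le_norm (𝕜 := ℝ) (b j) ξ

lemma abs_inner_sub_le_dist_omitCoord (b : OrthonormalBasis ι ℝ E) {j k : ι} (hj : j ≠ k)
    (ξ η : E) : |⟪b j, ξ⟫ - ⟪b j, η⟫| ≤ dist (omitCoord b k ξ) (omitCoord b k η) :=
  dist_le_pi_dist (omitCoord b k ξ) (omitCoord b k η) ⟨j, hj⟩

/- The equation `∑ ξ_j ^ 2 = 1` controls `ξ_k ^ 2`, and `ξ_k + η_k ≥ 2 c` then controls `ξ_k`. -/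
lemma abs_inner_sub_le_of_mem_sphericalCap (b : OrthonormalBasis ι ℝ E) (k : ι)
    {c : ℝ} (hc : 0 < c) {ξ η : E} (hξ : ξ ∈ sphericalCap (b k) c) (hη : η ∈ sphericalCap (b k) c) :
    |⟪b k, ξ⟫ - ⟪b k, η⟫| ≤
      Fintype.card {j // j ≠ k} / c * dist (omitCoord b k ξ) (omitCoord b k η) := by
  obtain ⟨hξ₁, hξc⟩ := hξ
  obtain ⟨hη₁, hηc⟩ := hη
  rw [mem_sphere_zero_iff_norm] at hξ₁ hη₁
  set δ := dist (omitCoord b k ξ) (omitCoord b k η)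
  have hinner {ζ : E} (hζ : ‖ζ‖ = 1) (j : ι) : |⟪b j, ζ⟫| ≤ 1 := by
    simpa [hζ] using norm_inner_le_norm (𝕜 := ℝ) (b j) ζ
  have hsq (j : {j // j ≠ k}) : |⟪b j, η⟫ ^ 2 - ⟪b j, ξ⟫ ^ 2| ≤ 2 * δ := by
    rw [sq_sub_sq, abs_mul, abs_sub_comm]
    gcongr
    · exact (abs_add_le _ _).trans (by linarith [hinner hξ₁ j, hinner hη₁ j])
    · exact abs_inner_sub_le_dist_omitCoord b j.2 ξ η
  have hsum : ⟪b k, ξ⟫ ^ 2 - ⟪b k, η⟫ ^ 2 =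
      ∑ j : {j // j ≠ k}, (⟪b j, η⟫ ^ 2 - ⟪b j, ξ⟫ ^ 2) := by
    have hξ₂ := b.sum_sq_inner_right ξ
    have hη₂ := b.sum_sq_inner_right η
    rw [Fintype.sum_eq_add_sum_subtype_ne _ k, hξ₁] at hξ₂
    rw [Fintype.sum_eq_add_sum_subtype_ne _ k, hη₁] at hη₂
    rw [Finset.sum_sub_distrib]
    linarith
  rw [div_mul_eq_mul_div, le_div_iff₀ hc]
  have h2c : 2 * c * |⟪b k, ξ⟫ - ⟪b k, η⟫| ≤ 2 * (Fintype.card {j // j ≠ k} * δ) :=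
    calc 2 * c * |⟪b k, ξ⟫ - ⟪b k, η⟫|
        ≤ |⟪b k, ξ⟫ + ⟪b k, η⟫| * |⟪b k, ξ⟫ - ⟪b k, η⟫| := by
          gcongr
          exact le_trans (by linarith) (le_abs_self _)
      _ = |∑ j : {j // j ≠ k}, (⟪b j, η⟫ ^ 2 - ⟪b j, ξ⟫ ^ 2)| := by
          rw [← abs_mul, ← sq_sub_sq, hsum]
      _ ≤ ∑ _j : {j // j ≠ k}, 2 * δ :=
          (Finset.abs_sum_le_sum_abs _ _).trans (Finset.sum_le_sum fun j _ => hsq j)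
      _ = 2 * (Fintype.card {j // j ≠ k} * δ) := by
          rw [Finset.sum_const, nsmul_eq_mul, Finset.card_univ]
          ring
  linarith

lemma exists_antilipschitzWith_restrict_omitCoord (b : OrthonormalBasis ι ℝ E) (k : ι) {c : ℝ}
    (hc : 0 < c) :
    ∃ K, AntilipschitzWith K ((sphericalCap (b k) c).domRestrict (omitCoord b k)) := by
  set N : ℝ := (Fintype.card {j // j ≠ k} : ℝ)
  refine ⟨NNReal.mk (√(Fintype.card ι) * (1 + N / c)) (by positivity),
    AntilipschitzWith.of_le_mul_dist fun ⟨ξ, hξ⟩ ⟨η, hη⟩ => ?_⟩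
  have : Nonempty ι := ⟨k⟩
  rw [Subtype.dist_eq, domRestrict_apply, domRestrict_apply, NNReal.coe_mk, dist_eq_norm, mul_assoc]
  refine (b.norm_le_card_mul_iSup_norm_inner (ξ - η)).trans ?_
  gcongr
  refine ciSup_le fun j => ?_
  rw [inner_sub_right, norm_eq_abs]
  rcases eq_or_ne j k with rfl | hj
  · refine (abs_inner_sub_le_of_mem_sphericalCap b j hc hξ hη).trans ?_
    gcongr
    exact le_add_of_nonneg_left zero_le_one
  · refine (abs_inner_sub_le_dist_omitCoord b hj ξ η).trans (le_mul_of_one_le_left dist_nonneg ?_)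
    exact le_add_of_nonneg_right (by positivity)

lemma setLIntegral_sphericalCap_omitCoord_lt_top [MeasurableSpace E] [BorelSpace E]
    (b : OrthonormalBasis ι ℝ E) (k : ι) {c : ℝ} (hc : 0 < c)
    {g : ({j // j ≠ k} → ℝ) → ℝ≥0∞} (hg : Measurable g) (hfin : ∫⁻ y in closedBall 0 1, g y < ⊤) :
    ∫⁻ ξ in sphericalCap (b k) c, g (omitCoord b k ξ) ∂μH[(finrank ℝ E : ℝ) - 1] < ⊤ := by
  obtain ⟨K, hK⟩ := exists_antilipschitzWith_restrict_omitCoord b k hc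
  have hcard : (finrank ℝ E : ℝ) - 1 = Fintype.card {j // j ≠ k} := by
    have hsum := Fintype.sum_eq_add_sum_subtype_ne (fun _ : ι => (1 : ℝ)) k
    simp only [Finset.sum_const, Finset.card_univ, nsmul_eq_mul, mul_one] at hsum
    rw [finrank_eq_card_basis b.toBasis, hsum, add_sub_cancel_left]
  rw [hcard]
  refine (setLIntegral_hausdorffMeasure_comp_le (Nat.cast_nonneg _) (measurable_omitCoord b k) hK
    ((mapsTo_omitCoord b k).mono_left (sep_subset _ _)) hg).trans_lt (ENNReal.mul_lt_top ?_ ?_)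
  · exact ENNReal.rpow_lt_top_of_nonneg (Nat.cast_nonneg _) ENNReal.coe_ne_top
  · rwa [hausdorffMeasure_pi_real]

end DecidableEq

variable [MeasurableSpace E] [BorelSpace E]

lemma setLIntegral_sphericalCap_enorm_inner_rpow_lt_top (b : OrthonormalBasis ι ℝ E) (j k : ι)
    {c r : ℝ} (hc : 0 < c) (hr : 0 ≤ r) (hr' : r < 1) :
    ∫⁻ ξ in sphericalCap (b k) c, ‖⟪b j, ξ⟫‖ₑ ^ (-r) ∂μH[(finrank ℝ E : ℝ) - 1] < ⊤ := by
  classical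
  rcases eq_or_ne j k with rfl | hj
  · have hbound : ∀ ξ ∈ sphericalCap (b j) c, ‖⟪b j, ξ⟫‖ₑ ^ (-r) ≤ (ENNReal.ofReal c ^ r)⁻¹ := by
      intro ξ hξ
      rw [ENNReal.rpow_neg, enorm_eq_ofReal_abs]
      gcongr
      exact hξ.2.trans (le_abs_self _)
    refine (setLIntegral_mono measurable_const hbound).trans_lt
      (setLIntegral_sphericalCap_omitCoord_lt_top b j hc measurable_const ?_)
    rw [setLIntegral_const]
    exact ENNReal.mul_lt_top (by simp [ENNReal.rpow_pos, hc]) measure_closedBall_lt_top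
  · exact setLIntegral_sphericalCap_omitCoord_lt_top b k hc
      (g := fun y => ‖y ⟨j, hj⟩‖ₑ ^ (-r)) (by fun_prop)
      (lintegral_closedBall_pi_enorm_apply_rpow_lt_top hr' _)

/-- The surface measure of the unit sphere, as a measure on the ambient space: the Hausdorff measure
of dimension `finrank ℝ E - 1` (a real number, hence `-1` when `E` is trivial) restricted to the
sphere. -/
def sphereMeasure (E : Type*) [NormedAddCommGroup E] [InnerProductSpace ℝ E] [MeasurableSpace E]
    [BorelSpace E] : Measure E :=
  μH[(finrank ℝ E : ℝ) - 1].restrict (sphere 0 1)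

lemma lintegral_sphereMeasure_enorm_basis_inner_rpow_lt_top (b : OrthonormalBasis ι ℝ E) (j : ι)
    {r : ℝ} (hr : 0 ≤ r) (hr' : r < 1) :
    ∫⁻ ξ, ‖⟪b j, ξ⟫‖ₑ ^ (-r) ∂sphereMeasure E < ⊤ := by
  set c : ℝ := √(Fintype.card ι : ℝ)⁻¹
  have hc : 0 < c := sqrt_pos.2 (inv_pos.2 (Nat.cast_pos.2 (Fintype.card_pos_iff.2 ⟨j⟩)))
  have hcap (k : ι) : ∫⁻ ξ in sphericalCap (b k) c ∪ sphericalCap (-b k) c,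
      ‖⟪b j, ξ⟫‖ₑ ^ (-r) ∂μH[(finrank ℝ E : ℝ) - 1] < ⊤ := by
    refine (lintegral_union_le _ _ _).trans_lt (ENNReal.add_lt_top.2
      ⟨setLIntegral_sphericalCap_enorm_inner_rpow_lt_top b j k hc hr hr', ?_⟩)
    simpa using setLIntegral_sphericalCap_enorm_inner_rpow_lt_top
      (b.map (LinearIsometryEquiv.neg ℝ)) j k hc hr hr'
  rw [sphereMeasure]
  refine ((lintegral_mono_set (sphere_subset_iUnion_sphericalCap b)).trans
    (lintegral_iUnion_le _ _)).trans_lt ?_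
  rw [tsum_fintype]
  exact ENNReal.sum_lt_top.2 fun k _ => hcap k

lemma ae_sphereMeasure_abs_inner_le (x : E) : ∀ᵐ ξ ∂sphereMeasure E, |⟪x, ξ⟫| ≤ ‖x‖ := by
  filter_upwards [ae_restrict_mem isClosed_sphere.measurableSet] with ξ hξ
  simpa [mem_sphere_zero_iff_norm.1 hξ] using norm_inner_le_norm (𝕜 := ℝ) x ξ

variable [FiniteDimensional ℝ E]

theorem lintegral_sphereMeasure_enorm_inner_rpow_lt_top {v : E} (hv : v ≠ 0) {r : ℝ} (hr : 0 ≤ r)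
    (hr' : r < 1) : ∫⁻ ξ, ‖⟪v, ξ⟫‖ₑ ^ (-r) ∂sphereMeasure E < ⊤ := by
  set e : E := ‖v‖⁻¹ • v
  have hve : v = ‖v‖ • e := (smul_inv_smul₀ (norm_ne_zero_iff.2 hv) v).symm
  have he : Orthonormal ℝ (Subtype.val : ({e} : Set E) → E) := by
    rw [orthonormal_subsingleton_iff]
    rintro ⟨_, rfl⟩
    simp [e, norm_smul, hv]
  obtain ⟨s, b, hes, hb⟩ := he.exists_orthonormalBasis_extension
  have hfin := lintegral_sphereMeasure_enorm_basis_inner_rpow_lt_top b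
    ⟨e, hes (mem_singleton e)⟩ hr hr'
  rw [hb] at hfin
  have hscale (ξ : E) : ‖⟪v, ξ⟫‖ₑ ^ (-r) = ‖v‖ₑ ^ (-r) * ‖⟪e, ξ⟫‖ₑ ^ (-r) := by
    conv_lhs => rw [hve]
    rw [real_inner_smul_left, enorm_mul, enorm_norm,
      ENNReal.mul_rpow_of_ne_top enorm_ne_top enorm_ne_top]
  simp only [hscale]
  rw [lintegral_const_mul _ (by fun_prop), ENNReal.rpow_neg]
  exact ENNReal.mul_lt_top (by simp [ENNReal.rpow_pos, hv]) hfin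

lemma ae_sphereMeasure_inner_ne_zero {v : E} (hv : v ≠ 0) : ∀ᵐ ξ ∂sphereMeasure E, ⟪v, ξ⟫ ≠ 0 := by
  have hlt := lintegral_sphereMeasure_enorm_inner_rpow_lt_top hv (r := 1 / 2) (by norm_num)
    (by norm_num)
  filter_upwards [ae_lt_top (by fun_prop) hlt.ne] with ξ hξ hzero
  simp [hzero] at hξ

instance : IsFiniteMeasure (sphereMeasure E) := by
  rcases subsingleton_or_nontrivial E with _ | _
  · rw [sphereMeasure, sphere_eq_empty_of_subsingleton one_ne_zero, Measure.restrict_empty]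
    infer_instance
  · obtain ⟨v, hv⟩ := exists_ne (0 : E)
    exact ⟨by simpa using lintegral_sphereMeasure_enorm_inner_rpow_lt_top hv le_rfl one_pos⟩

end Sphere

section CosineTransform

lemma withDensity_ofReal_le_smul {α : Type*} [MeasurableSpace α] {μ : Measure α} {f : α → ℝ} :
    μ.withDensity (fun x => ENNReal.ofReal (f x)) ≤ eLpNorm f ⊤ μ • μ := by
  rw [← withDensity_const, eLpNorm_exponent_top]
  refine withDensity_mono ?_
  filter_upwards [ae_le_eLpNormEssSup (f := f) (μ := μ)] with x hx
  exact (ofReal_le_enorm _).trans hx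

lemma integral_withDensity_ofReal {α : Type*} [MeasurableSpace α] {μ : Measure α} {f : α → ℝ}
    (hf : AEMeasurable f μ) (hf₀ : 0 ≤ᵐ[μ] f) (g : α → ℝ) :
    ∫ x, g x ∂μ.withDensity (fun x => ENNReal.ofReal (f x)) = ∫ x, g x * f x ∂μ := by
  rw [integral_withDensity_eq_integral_toReal_smul₀ hf.ennreal_ofReal
    (ae_of_all _ fun _ => ENNReal.ofReal_lt_top)]
  refine integral_congr_ae ?_
  filter_upwards [hf₀] with x hx
  rw [ENNReal.toReal_ofReal hx, smul_eq_mul, mul_comm]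

lemma linearIndependent_pair_of_norm_eq {F : Type*} [NormedAddCommGroup F] [NormedSpace ℝ F]
    {u v : F} (hu : u ≠ 0) (huv : ‖v‖ = ‖u‖) (hne : v ≠ u) (hne' : v ≠ -u) :
    LinearIndependent ℝ ![v, u] := by
  rw [LinearIndependent.pair_symm_iff, LinearIndependent.pair_iff' hu]
  rintro c rfl
  rw [norm_smul, mul_eq_right₀ (norm_ne_zero_iff.2 hu), norm_eq_abs] at huv
  rcases eq_or_eq_neg_of_abs_eq huv with rfl | rfl
  · exact hne (one_smul ℝ u)
  · exact hne' (neg_one_smul ℝ u)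

variable {E : Type*} [NormedAddCommGroup E] [InnerProductSpace ℝ E] [FiniteDimensional ℝ E]
  [MeasurableSpace E] [BorelSpace E] {p : ℝ} {u v : E}

lemma memLp_inner_sphereMeasure (q : ℝ≥0∞) (x : E) :
    MemLp (fun ξ => ⟪x, ξ⟫) q (sphereMeasure E) :=
  MemLp.of_bound (by fun_prop) ‖x‖ (ae_sphereMeasure_abs_inner_le x)

lemma integrable_abs_inner_rpow_sphereMeasure (hv : v ≠ 0) {s : ℝ} (hs : -1 < s) :
    Integrable (fun ξ => |⟪v, ξ⟫| ^ s) (sphereMeasure E) := by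
  have hmeas : AEStronglyMeasurable (fun ξ => |⟪v, ξ⟫| ^ s) (sphereMeasure E) :=
    (by fun_prop : Measurable _).aestronglyMeasurable
  rcases le_total 0 s with h | h
  · refine Integrable.of_bound hmeas (‖v‖ ^ s) ?_
    filter_upwards [ae_sphereMeasure_abs_inner_le v] with ξ hξ
    rw [norm_of_nonneg (by positivity)]
    gcongr
  · refine ⟨hmeas, (lintegral_congr_ae ?_).trans_lt
      (lintegral_sphereMeasure_enorm_inner_rpow_lt_top hv (neg_nonneg.2 h) (neg_lt.1 hs))⟩
    filter_upwards [ae_sphereMeasure_inner_ne_zero hv] with ξ hξ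
    rw [neg_neg, enorm_eq_ofReal_abs ⟪v, ξ⟫, enorm_eq_ofReal (by positivity),
      ENNReal.ofReal_rpow_of_pos (abs_pos.2 hξ)]

lemma integrable_abs_inner_rpow_mul_sq_sphereMeasure (hv : v ≠ 0) {s : ℝ} (hs : -1 < s) (u : E) :
    Integrable (fun ξ => |⟪v, ξ⟫| ^ s * ⟪u, ξ⟫ ^ 2) (sphereMeasure E) := by
  refine (integrable_abs_inner_rpow_sphereMeasure hv hs).mul_bdd (c := ‖u‖ ^ 2) (by fun_prop) ?_
  filter_upwards [ae_sphereMeasure_abs_inner_le u] with ξ hξ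
  rw [norm_pow, norm_eq_abs]
  gcongr

theorem iteratedDeriv_two_integral_abs_inner_rpow_pos (hp : 1 < p) {ν : Measure E} [NeZero ν]
    {C : ℝ≥0∞} (hC : C ≠ ⊤) (hν : ν ≤ C • sphereMeasure E) (huv : LinearIndependent ℝ ![v, u]) :
    0 < iteratedDeriv 2 (fun t : ℝ => (∫ ξ, |⟪v + t • u, ξ⟫| ^ p ∂ν) ^ (1 / p)) 0 := by
  have hac : ν ≪ sphereMeasure E := Measure.absolutelyContinuous_of_le_smul hν
  have hv : v ≠ 0 := huv.ne_zero 0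
  simp only [inner_add_left, real_inner_smul_left]
  refine iteratedDeriv_two_integral_rpow_pos hp
    ((memLp_inner_sphereMeasure _ v).of_measure_le_smul hC hν)
    ((memLp_inner_sphereMeasure _ u).of_measure_le_smul hC hν)
    (hac.ae_le (ae_sphereMeasure_inner_ne_zero hv))
    ((integrable_abs_inner_rpow_mul_sq_sphereMeasure hv (by linarith) u).of_measure_le_smul hC hν)
    fun s t hst => LinearIndependent.pair_iff.1 huv s t ?_
  by_contra hne
  have hν₀ : ∀ᵐ ξ ∂ν, ⟪s • v + t • u, ξ⟫ ≠ 0 :=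
    hac.ae_le (ae_sphereMeasure_inner_ne_zero hne)
  obtain ⟨ξ, hξ, hξ₀⟩ := (hν₀.and hst).exists
  exact hξ (by rwa [inner_add_left, real_inner_smul_left, real_inner_smul_left])

theorem second_directional_derivative_pos_general (hp : 1 < p) {f : E → ℝ}
    (hf : MemLp f ⊤ (sphereMeasure E)) (hf_nonneg : 0 ≤ᵐ[sphereMeasure E] f)
    (hf_pos : 0 < ∫ ξ, f ξ ∂sphereMeasure E) {H : E → ℝ} (hH_nonneg : ∀ x, 0 ≤ H x)
    (hH : ∀ x, H x ^ p = ∫ ξ, |⟪x, ξ⟫| ^ p * f ξ ∂sphereMeasure E)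
    (huv : LinearIndependent ℝ ![v, u]) :
    0 < iteratedDeriv 2 (fun t : ℝ => H (v + t • u)) 0 := by
  set ν := (sphereMeasure E).withDensity fun ξ => ENNReal.ofReal (f ξ) with hν
  have hint := integral_withDensity_ofReal hf.aemeasurable hf_nonneg
  have : NeZero ν := ⟨fun h => by simpa [← hν, h, hf_pos.ne] using hint 1⟩
  have hH' (x : E) : H x = (∫ ξ, |⟪x, ξ⟫| ^ p ∂ν) ^ (1 / p) := by
    rw [hint, ← hH, one_div, rpow_rpow_inv (hH_nonneg x) (zero_lt_one.trans hp).ne']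
  simp only [hH']
  exact iteratedDeriv_two_integral_abs_inner_rpow_pos hp hf.eLpNorm_ne_top
    withDensity_ofReal_le_smul huv

end CosineTransform

theorem second_directional_derivative_pos (n : ℕ) (hn : 2 ≤ n) (p : ℝ) (hp : 1 < p)
    (hpe : ∀ k : ℕ, p ≠ 2 * k)
    (f : EuclideanSpace ℝ (Fin n) → ℝ) (hf_meas : Measurable f)
    (hf_bdd : ∃ M : ℝ, ∀ ξ, |f ξ| ≤ M)
    (hf_nonneg : ∀ ξ, 0 ≤ f ξ)
    (hf_pos : 0 < ∫ ξ in sphere (0 : EuclideanSpace ℝ (Fin n)) 1, f ξ ∂(μH[(n : ℝ) - 1]))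
    (H : EuclideanSpace ℝ (Fin n) → ℝ) (hH_nonneg : ∀ x, 0 ≤ H x)
    (hH : ∀ x, H x ^ p = ∫ ξ in sphere (0 : EuclideanSpace ℝ (Fin n)) 1,
      |⟪x, ξ⟫| ^ p * f ξ ∂(μH[(n : ℝ) - 1]))
    (u v : EuclideanSpace ℝ (Fin n)) (hu : ‖u‖ = 1) (hv : ‖v‖ = 1)
    (hvu : v ≠ u) (hvu' : v ≠ -u) :
    0 < iteratedDeriv 2 (fun t : ℝ => H (v + t • u)) 0 := by
  obtain ⟨M, hM⟩ := hf_bdd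
  exact second_directional_derivative_pos_general hp
    (MemLp.of_bound hf_meas.aestronglyMeasurable M (ae_of_all _ hM)) (ae_of_all _ hf_nonneg)
    (by simpa [sphereMeasure] using hf_pos) hH_nonneg (by simpa [sphereMeasure] using hH)
    (linearIndependent_pair_of_norm_eq (by simp [← norm_ne_zero_iff, hu]) (hv.trans hu.symm)
      hvu hvu')
end
end
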